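/- arXiv:math/0403181 — 7 statements merged into one kernel-verified Lean document; each statement's English description precedes it below -/
import Mathlib

section
/- Let R be a commutative ring, Φ : R → ℤ/3ℤ a surjective ring homomorphism with kernel I, A an R-module, and τ : A × A × A → A an R-trilinear map satisfying: (T0) r·τ(x,y,z) = 0 for all r ∈ I and x, y, z ∈ A; (T1) τ(x,x,y) = 0; (T2) τ(τ(x,y,z),u,v) = 0; (T3) τ(u,v,τ(x,y,z)) = 0, for all x, y, z, u, v ∈ A. Define x⊛y = x + y + τ(x,y,x−y). Then: (1) ⊛ is commutative with two-sided identity 0; (2) for all x, b ∈ A there is a unique y with x⊛y = b (so (A,⊛) is a commutative loop); (3) (x⊛x)⊛(y⊛z) = (x⊛y)⊛(x⊛z) for all x, y, z (so (A,⊛) is a commutative Moufang loop); (4) r·(x⊛y) = (r·x)⊛(r·y) for all r ∈ R; (5) ((r·x)⊛y)⊛z = (r·x)⊛(y⊛z) for all r ∈ I and x, y, z ∈ A; (6) the centre {a ∈ A : (a⊛x)⊛y = a⊛(x⊛y) for all x, y ∈ A} equals {a ∈ A : τ(a,x,y) + τ(x,y,a) + τ(y,a,x) = 0 for all x, y ∈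 A}. -/
/-- Let `R` be a commutative ring, `Φ : R → ℤ/3ℤ` a surjective ring homomorphism with
kernel `I`, `A` an `R`-module and `τ : A × A × A → A` an `R`-trilinear map satisfying
(T0) `r • τ(x,y,z) = 0` for `r ∈ I`; (T1) `τ(x,x,y) = 0`; (T2) `τ(τ(x,y,z),u,v) = 0`;
(T3) `τ(u,v,τ(x,y,z)) = 0`.  With `x ⊛ y = x + y + τ(x,y,x−y)` we have:
(1) `⊛` is commutative with two-sided identity `0`;
(2) for all `x, b` there is a unique `y` with `x ⊛ y = b`;
(3) `(x⊛x)⊛(y⊛z) = (x⊛y)⊛(x⊛z)`;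
(4) `r • (x⊛y) = (r•x) ⊛ (r•y)`;
(5) `((r•x)⊛y)⊛z = (r•x)⊛(y⊛z)` for `r ∈ I`;
(6) the centre of `(A,⊛)` is `{a | ∀ x y, τ(a,x,y) + τ(x,y,a) + τ(y,a,x) = 0}`. -/
theorem ternary_algebra_gives_commutative_Moufang_loop
    {R : Type*} [CommRing R] {A : Type*} [AddCommGroup A] [Module R A]
    (Φ : R →+* ZMod 3) (hΦ : Function.Surjective Φ)
    (τ : A → A → A → A)
    (hadd₁ : ∀ x x' y z, τ (x + x') y z = τ x y z + τ x' y z)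
    (hadd₂ : ∀ x y y' z, τ x (y + y') z = τ x y z + τ x y' z)
    (hadd₃ : ∀ x y z z', τ x y (z + z') = τ x y z + τ x y z')
    (hsmul₁ : ∀ (r : R) x y z, τ (r • x) y z = r • τ x y z)
    (hsmul₂ : ∀ (r : R) x y z, τ x (r • y) z = r • τ x y z)
    (hsmul₃ : ∀ (r : R) x y z, τ x y (r • z) = r • τ x y z)
    (hT0 : ∀ r ∈ RingHom.ker Φ, ∀ x y z : A, r • τ x y z = 0)
    (hT1 : ∀ x y : A, τ x x y = 0)
    (hT2 : ∀ x y z u v : A, τ (τ x y z) u v = 0)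
    (hT3 : ∀ x y z u v : A, τ u v (τ x y z) = 0)
    (op : A → A → A) (hop : ∀ x y : A, op x y = x + y + τ x y (x - y)) :
    (∀ x y : A, op x y = op y x) ∧
    (∀ x : A, op 0 x = x ∧ op x 0 = x) ∧
    (∀ x b : A, ∃! y : A, op x y = b) ∧
    (∀ x y z : A, op (op x x) (op y z) = op (op x y) (op x z)) ∧
    (∀ (r : R) (x y : A), r • op x y = op (r • x) (r • y)) ∧
    (∀ r ∈ RingHom.ker Φ, ∀ x y z : A, op (op (r • x) y) z = op (r • x) (op y z)) ∧
    ({a : A | ∀ x y : A, op (op a x) y = op a (op x y)}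
      = {a : A | ∀ x y : A, τ a x y + τ x y a + τ y a x = 0}) := by
  have hneg₁ : ∀ x y z, τ (-x) y z = - τ x y z := fun x y z => by
    have := hsmul₁ (-1) x y z; simpa using this
  have hneg₂ : ∀ x y z, τ x (-y) z = - τ x y z := fun x y z => by
    have := hsmul₂ (-1) x y z; simpa using this
  have hneg₃ : ∀ x y z, τ x y (-z) = - τ x y z := fun x y z => by
    have := hsmul₃ (-1) x y z; simpa using this
  have h01 : ∀ y z, τ 0 y z = 0 := fun y z => by
    have := hsmul₁ 0 0 y z; simpa using this
  have h02 : ∀ y z, τ y 0 z = 0 := fun y z => by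
    have := hsmul₂ 0 y 0 z; simpa using this
  have hanti : ∀ x y z, τ y x z = - τ x y z := fun x y z => by
    have := hT1 (x + y) z
    simp only [hadd₁, hadd₂, hT1, zero_add, add_zero] at this
    exact eq_neg_of_add_eq_zero_right this
  have hmid : ∀ x y z u v, τ u (τ x y z) v = 0 := fun x y z u v => by
    rw [hanti, hT2, neg_zero]
  have h3 : ∀ x y z, (3 : ℤ) • τ x y z = 0 := fun x y z => by
    have h := hT0 3 (by rw [RingHom.mem_ker, map_ofNat]; rfl) x y z
    rw [← h, ← Int.cast_smul_eq_zsmul R]; norm_num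
  have hcube : ∀ (r : R) x y z, r • r • r • τ x y z = r • τ x y z := fun r x y z => by
    have h := hT0 (r * r * r - r) (by
      rw [RingHom.mem_ker]; simp only [map_sub, map_mul]
      generalize Φ r = c
      revert c; decide) x y z
    rw [sub_smul, sub_eq_zero, mul_smul, mul_smul] at h
    exact h
  have hkey : ∀ a x y, op (op a x) y = op a (op x y) + (τ a x y + τ x y a + τ y a x) :=
    fun a x y => by
    simp only [hop, sub_eq_add_neg, neg_add, hadd₁, hadd₂, hadd₃, hneg₁, hneg₂, hneg₃,
      hT1, hT2, hT3, hmid, hanti a y]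
    linear_combination (norm := module) h3 a y x
  refine ⟨?_, ?_, ?_, ?_, ?_, ?_, ?_⟩
  · intro x y
    rw [hop, hop, hanti x y, ← hneg₃, neg_sub, add_comm x y]
  · intro x
    simp [hop, h01, h02]
  · intro x b
    refine ⟨b - x - τ x (b - x) (x - (b - x)), ?_, ?_⟩
    · simp only [hop, sub_eq_add_neg, neg_add, hadd₁, hadd₂, hadd₃, hneg₁, hneg₂, hneg₃,
        hT1, hT2, hT3, hmid, neg_zero, neg_neg, add_zero, zero_add]
      module
    · rintro y rfl
      simp only [hop, sub_eq_add_neg, neg_add, hadd₁, hadd₂, hadd₃, hneg₁, hneg₂, hneg₃,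
        hT1, hT2, hT3, hmid, neg_zero, neg_neg, add_zero, zero_add]
      module
  · intro x y z
    simp only [hop, sub_eq_add_neg, neg_add, hadd₁, hadd₂, hadd₃, hneg₁, hneg₂, hneg₃,
      hT1, hT2, hT3, hmid, hanti x y]
    linear_combination (norm := module) h3 x y x + h3 x z x - h3 x y z - h3 x z y
  · intro r x y
    simp only [hop, ← smul_sub, hsmul₁, hsmul₂, hsmul₃, hcube, smul_add]
  · intro r hr x y z
    rw [hkey, hsmul₁, hsmul₂, hsmul₃, hT0 r hr, hT0 r hr, hT0 r hr]
    simp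
  · ext a
    simp only [Set.mem_ofPred_eq, hkey, add_eq_left]
end

section
/- Let R be a commutative noetherian ring, M an R-module, and N the R[X]-module of finitely supported sequences a : ℕ → M, where R acts componentwise and (X·a)(n) = a(n+1) for all n. Then the socle of N as an R[X]-module equals {a ∈ N : a(n) = 0 for all n ≥ 1 and a(0) ∈ Soc(M)}, i.e., the copy of the R-socle of M sitting in coordinate 0. -/
open Polynomial

/-- The shift endomorphism of the module of finitely supported sequences `ℕ → M`:
`(shift a) n = a (n + 1)`. -/
noncomputable def shiftMap (R M : Type*) [CommRing R] [AddCommGroup M] [Module R M] :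
    (ℕ →₀ M) →ₗ[R] (ℕ →₀ M) :=
  Finsupp.lcomapDomain (fun n => n + 1) (fun _ _ h => Nat.succ_injective h)

/-- The module of divided powers `M[X⁻¹]`: the finitely supported sequences `ℕ → M`
with the `R[X]`-module structure in which `R` acts componentwise and `X` acts by the
shift `(X • a) n = a (n + 1)`. -/
noncomputable abbrev DividedPowersModule (R M : Type*) [CommRing R] [AddCommGroup M]
    [Module R M] : Type _ :=
  Module.AEval' (shiftMap R M)

/-- The socle of a module: the sum of all its simple submodules. -/
def socle (R M : Type*) [Ring R] [AddCommGroup M] [Module R M] : Submodule R M :=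
  sSup {S : Submodule R M | IsSimpleModule R ↥S}

namespace DPAux

variable {R M : Type*} [CommRing R] [AddCommGroup M] [Module R M]

theorem shift_apply (a : ℕ →₀ M) (n : ℕ) : shiftMap R M a n = a (n + 1) := rfl

noncomputable def emb (R M : Type*) [CommRing R] [AddCommGroup M] [Module R M] :
    M →ₗ[R] DividedPowersModule R M :=
  (Module.AEval'.of (shiftMap R M)).toLinearMap ∘ₗ Finsupp.lsingle 0

theorem emb_apply (m : M) :
    emb R M m = Module.AEval'.of (shiftMap R M) (Finsupp.single 0 m) := rfl

theorem emb_inj : Function.Injective (emb R M) := by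
  intro x y h
  rw [emb_apply, emb_apply] at h
  exact Finsupp.single_injective 0 ((Module.AEval'.of (shiftMap R M)).injective h)

theorem X_smul_emb (m : M) : (X : R[X]) • emb R M m = 0 := by
  rw [emb_apply, Module.AEval'.X_smul_of]
  have : shiftMap R M (Finsupp.single 0 m) = 0 := by
    ext n
    rw [shift_apply]
    simp
  rw [this, map_zero]

theorem C_smul' (r : R) (v : DividedPowersModule R M) : (C r : R[X]) • v = r • v := by
  rw [← Polynomial.algebraMap_eq, algebraMap_smul]

theorem smul_emb (p : R[X]) (m : M) : p • emb R M m = emb R M (p.coeff 0 • m) := by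
  conv_lhs => rw [← Polynomial.divX_mul_X_add p]
  rw [add_smul, mul_smul, X_smul_emb, smul_zero, zero_add, C_smul', map_smul]

/-- image -/
noncomputable def img (S : Submodule R M) : Submodule R[X] (DividedPowersModule R M) where
  carrier := emb R M '' S
  add_mem' := by
    rintro _ _ ⟨x, hx, rfl⟩ ⟨y, hy, rfl⟩
    exact ⟨x + y, S.add_mem hx hy, map_add _ _ _⟩
  zero_mem' := ⟨0, S.zero_mem, map_zero _⟩
  smul_mem' := by
    rintro p _ ⟨x, hx, rfl⟩
    exact ⟨p.coeff 0 • x, S.smul_mem _ hx, (smul_emb p x).symm⟩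

theorem mem_img {S : Submodule R M} {v : DividedPowersModule R M} :
    v ∈ img S ↔ ∃ m ∈ S, emb R M m = v := Iff.rfl

/-- preimage -/
noncomputable def pre (U : Submodule R[X] (DividedPowersModule R M)) : Submodule R M where
  carrier := {m | emb R M m ∈ U}
  add_mem' := by
    intro x y hx hy
    simpa using U.add_mem hx hy
  zero_mem' := by simp
  smul_mem' := by
    intro r x hx
    have := U.smul_mem (C r) hx
    rwa [C_smul', ← map_smul] at this

theorem mem_pre {U : Submodule R[X] (DividedPowersModule R M)} {m : M} :
    m ∈ pre U ↔ emb R M m ∈ U := Iff.rfl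

theorem pre_img (S : Submodule R M) : pre (img S) = S := by
  ext m
  rw [mem_pre, mem_img]
  constructor
  · rintro ⟨x, hx, h⟩
    rwa [← emb_inj h]
  · intro h
    exact ⟨m, h, rfl⟩

theorem img_mono {S T : Submodule R M} (h : S ≤ T) : img S ≤ img T := by
  rintro _ ⟨x, hx, rfl⟩
  exact ⟨x, h hx, rfl⟩

theorem pre_mono {S T : Submodule R[X] (DividedPowersModule R M)} (h : S ≤ T) :
    pre S ≤ pre T := fun _ hx => h hx

theorem img_pre {U : Submodule R[X] (DividedPowersModule R M)} (h : U ≤ img ⊤) :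
    img (pre U) = U := by
  apply le_antisymm
  · rintro _ ⟨x, hx, rfl⟩
    exact hx
  · intro u hu
    obtain ⟨x, -, rfl⟩ := h hu
    exact ⟨x, hu, rfl⟩

theorem img_bot : img (⊥ : Submodule R M) = ⊥ := by
  rw [eq_bot_iff]
  rintro _ ⟨x, hx, rfl⟩
  have : x = 0 := hx
  simp [this]

theorem pre_bot : pre (⊥ : Submodule R[X] (DividedPowersModule R M)) = ⊥ := by
  rw [← img_bot, pre_img]

theorem img_atom {S : Submodule R M} (h : IsAtom S) : IsAtom (img S) := by
  refine ⟨fun h0 => h.1 ?_, fun U hU => ?_⟩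
  · rw [← pre_img S, h0, pre_bot]
  · have e := img_pre (hU.le.trans (img_mono le_top))
    have : pre U < S := by
      refine lt_of_le_of_ne ?_ ?_
      · rw [← pre_img S]
        exact pre_mono hU.le
      · intro h1
        rw [h1] at e
        exact hU.ne e.symm
    rw [← e, h.2 _ this, img_bot]

theorem pre_atom {U : Submodule R[X] (DividedPowersModule R M)} (h : IsAtom U)
    (hU : U ≤ img ⊤) : IsAtom (pre U) := by
  refine ⟨fun h0 => h.1 ?_, fun V hV => ?_⟩
  · rw [← img_pre hU, h0, img_bot]
  · have : img V < U := by
      refine lt_of_le_of_ne ?_ ?_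
      · rw [← img_pre hU]
        exact img_mono hV.le
      · intro h1
        rw [← h1, pre_img] at hV
        exact hV.ne rfl
    rw [← pre_img V, h.2 _ this, pre_bot]

theorem mem_img_top {v : DividedPowersModule R M} (h : (X : R[X]) • v = 0) :
    v ∈ img (⊤ : Submodule R M) := by
  obtain ⟨a, rfl⟩ := (Module.AEval'.of (shiftMap R M)).surjective v
  rw [Module.AEval'.X_smul_of, LinearEquiv.map_eq_zero_iff] at h
  refine ⟨a 0, trivial, ?_⟩
  rw [emb_apply]
  congr 1
  ext n
  cases n with
  | zero => simp
  | succ n =>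
    have := DFunLike.congr_fun h n
    rw [shift_apply] at this
    simp [this]

theorem X_pow_smul (a : ℕ →₀ M) (n : ℕ) : ∃ b : ℕ →₀ M,
    (X ^ n : R[X]) • Module.AEval'.of (shiftMap R M) a = Module.AEval'.of (shiftMap R M) b ∧
      ∀ k, b k = a (k + n) := by
  induction n with
  | zero => exact ⟨a, by simp, by simp⟩
  | succ n ih =>
    obtain ⟨b, hb, h⟩ := ih
    refine ⟨shiftMap R M b, ?_, fun k => ?_⟩
    · rw [pow_succ', mul_smul, hb, Module.AEval'.X_smul_of]
    · rw [shift_apply, h]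
      congr 1
      ring

theorem nilp (v : DividedPowersModule R M) : ∃ n : ℕ, (X ^ n : R[X]) • v = 0 := by
  obtain ⟨a, rfl⟩ := (Module.AEval'.of (shiftMap R M)).surjective v
  refine ⟨a.support.sup id + 1, ?_⟩
  obtain ⟨b, hb, h⟩ := X_pow_smul (R := R) a (a.support.sup id + 1)
  rw [hb, LinearEquiv.map_eq_zero_iff]
  ext k
  rw [h]
  by_contra hne
  have := Finset.le_sup (f := id) (Finsupp.mem_support_iff.2 hne)
  simp only [id] at this
  omega

theorem atom_le {U : Submodule R[X] (DividedPowersModule R M)} (h : IsAtom U) :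
    U ≤ img ⊤ := by
  rcases h.le_iff.1 (inf_le_left : U ⊓ LinearMap.ker (LinearMap.lsmul R[X] _ (X : R[X])) ≤ U)
    with h0 | h0
  · exfalso
    apply h.1
    rw [eq_bot_iff]
    intro u hu
    obtain ⟨n, hn⟩ := nilp u
    have key : ∀ n : ℕ, (X ^ n : R[X]) • u = 0 → u = 0 := by
      intro n
      induction n with
      | zero => simp
      | succ n ih =>
        intro h1
        apply ih
        have : (X ^ n : R[X]) • u ∈ U ⊓ LinearMap.ker (LinearMap.lsmul R[X] _ (X : R[X])) := by
          refine ⟨U.smul_mem _ hu, ?_⟩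
          rw [pow_succ', mul_smul] at h1
          exact h1
        rw [h0] at this
        exact this
    exact key n hn
  · intro u hu
    rw [← h0] at hu
    exact mem_img_top hu.2

theorem socle_eq :
    socle R[X] (DividedPowersModule R M) = img (socle R M) := by
  apply le_antisymm
  · refine sSup_le fun U hU => ?_
    have hU' := isSimpleModule_iff_isAtom.1 hU
    rw [← img_pre (atom_le hU')]
    exact img_mono (le_sSup (isSimpleModule_iff_isAtom.2 (pre_atom hU' (atom_le hU'))))
  · have : socle R M ≤ pre (socle R[X] (DividedPowersModule R M)) := by
      refine sSup_le fun S hS => ?_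
      rw [← pre_img S]
      exact pre_mono (le_sSup
        (isSimpleModule_iff_isAtom.2 (img_atom (isSimpleModule_iff_isAtom.1 hS))))
    rintro _ ⟨x, hx, rfl⟩
    exact this hx

end DPAux

/-- For `R` commutative noetherian, the socle of the `R[X]`-module `N = M[X⁻¹]` is the
copy of the `R`-socle of `M` sitting in coordinate `0`. -/
theorem socle_dividedPowers (R M : Type*) [CommRing R] [IsNoetherianRing R]
    [AddCommGroup M] [Module R M] :
    ∀ a : ℕ →₀ M,
      Module.AEval'.of (shiftMap R M) a ∈ socle (Polynomial R) (DividedPowersModule R M) ↔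
        ((∀ n : ℕ, 1 ≤ n → a n = 0) ∧ a 0 ∈ socle R M) := by
  intro a
  rw [DPAux.socle_eq, DPAux.mem_img]
  constructor
  · rintro ⟨m, hm, h⟩
    rw [DPAux.emb_apply] at h
    have h' := (Module.AEval'.of (shiftMap R M)).injective h
    subst h'
    refine ⟨fun n hn => ?_, by simpa using hm⟩
    rw [Finsupp.single_apply, if_neg (by omega)]
  · rintro ⟨h, h0⟩
    refine ⟨a 0, h0, ?_⟩
    rw [DPAux.emb_apply]
    congr 1
    ext n
    cases n with
    | zero => simp
    | succ n => simp [h (n + 1) (by omega)]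
end

section
/- Let R be a commutative noetherian ring, M an R-module, and N the R[X]-module of finitely supported sequences a : ℕ → M, where R acts componentwise and (X·a)(n) = a(n+1) for all n. For every m ≥ 1, an element a ∈ N lies in the m-th socle series member S_m(N) of the R[X]-module N if and only if a(i) ∈ S_{m−i}(M) (the (m−i)-th socle series member of the R-module M) for all 0 ≤ i ≤ m−1 and a(i) = 0 for all i ≥ m. -/
open Polynomial

/-- The socle series of a module: `S 0 = ⊥` and `S (m+1)` is the preimage in `M` of the
socle of `M ⧸ S m`. -/
def socleSeries (R M : Type*) [Ring R] [AddCommGroup M] [Module R M] :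
    ℕ → Submodule R M
  | 0 => ⊥
  | m + 1 => (socle R (M ⧸ socleSeries R M m)).comap (socleSeries R M m).mkQ


theorem mem_socle_of_max {R A : Type*} [CommRing R] [AddCommGroup A] [Module R A] {y : A}
    {I : Ideal R} (hI : I.IsMaximal) (h : ∀ r ∈ I, r • y = 0) : y ∈ socle R A := by
  by_cases hy : y = 0
  · rw [hy]; exact zero_mem _
  have hk : LinearMap.ker (LinearMap.toSpanSingleton R A y) = I := by
    symm
    apply hI.eq_of_le
    · intro h1
      apply hy
      have : (1 : R) ∈ LinearMap.ker (LinearMap.toSpanSingleton R A y) := by rw [h1]; trivial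
      simpa using this
    · intro r hr
      simpa using h r hr
  have hs : IsSimpleModule R (LinearMap.range (LinearMap.toSpanSingleton R A y)) := by
    rw [isSimpleModule_iff_quot_maximal]
    refine ⟨I, hI, ⟨?_⟩⟩
    rw [← hk]
    exact (LinearMap.quotKerEquivRange _).symm
  exact (le_sSup (a := LinearMap.range (LinearMap.toSpanSingleton R A y)) hs) ⟨1, by simp⟩

theorem socle_le_of {R A : Type*} [CommRing R] [AddCommGroup A] [Module R A]
    {P : Submodule R A}
    (h : ∀ y : A, ∀ I : Ideal R, I.IsMaximal → (∀ r ∈ I, r • y = 0) → y ∈ P) :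
    socle R A ≤ P := by
  apply sSup_le
  intro S hS y hy
  obtain ⟨I, hI, ⟨e⟩⟩ := isSimpleModule_iff_quot_maximal.1 (show IsSimpleModule R S from hS)
  refine h y I hI fun r hr => ?_
  have : r • (⟨y, hy⟩ : S) = 0 := by
    apply e.injective
    rw [map_smul, map_zero]
    obtain ⟨q, hq⟩ := Ideal.Quotient.mk_surjective (e ⟨y, hy⟩)
    rw [← hq]
    change Ideal.Quotient.mk I (r * q) = 0
    exact Ideal.Quotient.eq_zero_iff_mem.2 (I.mul_mem_right _ hr)
  exact congrArg Subtype.val this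

theorem mem_socleSeries_succ_of {R A : Type*} [CommRing R] [AddCommGroup A] [Module R A] {m : ℕ}
    {y : A} {I : Ideal R} (hI : I.IsMaximal) (h : ∀ r ∈ I, r • y ∈ socleSeries R A m) :
    y ∈ socleSeries R A (m + 1) := by
  change (socleSeries R A m).mkQ y ∈ socle R _
  refine mem_socle_of_max hI fun r hr => ?_
  rw [← map_smul, ← LinearMap.mem_ker, Submodule.ker_mkQ]
  exact h r hr

theorem socleSeries_mono_succ {R A : Type*} [CommRing R] [AddCommGroup A] [Module R A] (m : ℕ) :
    socleSeries R A m ≤ socleSeries R A (m + 1) := by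
  intro y hy
  change (socleSeries R A m).mkQ y ∈ socle R _
  have : (socleSeries R A m).mkQ y = 0 := by simpa using hy
  rw [this]; exact zero_mem _

theorem socleSeries_succ_le_of {R A : Type*} [CommRing R] [AddCommGroup A] [Module R A] {m : ℕ}
    {P : Submodule R A} (h0 : socleSeries R A m ≤ P)
    (h : ∀ y : A, ∀ I : Ideal R, I.IsMaximal → (∀ r ∈ I, r • y ∈ socleSeries R A m) → y ∈ P) :
    socleSeries R A (m + 1) ≤ P := by
  have key : socle R (A ⧸ socleSeries R A m) ≤ P.map (socleSeries R A m).mkQ := by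
    apply socle_le_of
    intro y I hI hy
    obtain ⟨b, rfl⟩ := (socleSeries R A m).mkQ_surjective y
    refine ⟨b, h b I hI fun r hr => ?_, rfl⟩
    have := hy r hr
    rwa [← map_smul, ← LinearMap.mem_ker, Submodule.ker_mkQ] at this
  intro y hy
  obtain ⟨b, hb, hby⟩ := key (show (socleSeries R A m).mkQ y ∈ socle R _ from hy)
  have h2 : b - y ∈ socleSeries R A m := by
    rw [← Submodule.ker_mkQ (socleSeries R A m), LinearMap.mem_ker, map_sub, hby, sub_self]
  have := P.sub_mem hb (h0 h2)
  simpa using this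

theorem shiftMap_apply' (R M : Type*) [CommRing R] [AddCommGroup M] [Module R M]
    (a : ℕ →₀ M) (n : ℕ) : shiftMap R M a n = a (n + 1) := rfl

open Module in
/-- The candidate submodule. -/
noncomputable def candT (R M : Type*) [CommRing R] [AddCommGroup M] [Module R M] (m : ℕ) :
    Submodule R[X] (DividedPowersModule R M) where
  carrier := {v | ∀ i, (AEval'.of (shiftMap R M)).symm v i ∈ socleSeries R M (m - i)}
  zero_mem' := by intro i; simp
  add_mem' := by
    intro v w hv hw i
    rw [map_add]
    exact add_mem (hv i) (hw i)
  smul_mem' := by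
    intro p v hv
    induction p using Polynomial.induction_on' with
    | add p q hp hq =>
      intro i
      rw [add_smul, map_add]
      exact add_mem (hp i) (hq i)
    | monomial n r =>
      rw [← C_mul_X_pow_eq_monomial, mul_smul]
      have hX : ∀ i, (AEval'.of (shiftMap R M)).symm ((X : R[X]) ^ n • v) i
          ∈ socleSeries R M (m - i) := by
        induction n with
        | zero => simpa using hv
        | succ n ih =>
          intro i
          rw [pow_succ', mul_smul]
          obtain ⟨a, ha⟩ := (AEval'.of (shiftMap R M)).surjective ((X : R[X]) ^ n • v)
          rw [← ha] at ih ⊢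
          rw [AEval'.X_smul_of, LinearEquiv.symm_apply_apply, shiftMap_apply']
          have h1 := ih (i + 1)
          rw [LinearEquiv.symm_apply_apply] at h1
          have h2 : socleSeries R M (m - (i + 1)) ≤ socleSeries R M (m - i) :=
            monotone_nat_of_le_succ socleSeries_mono_succ (by omega)
          exact h2 h1
      intro i
      rw [AEval.C_smul, map_smul]
      exact Submodule.smul_mem _ _ (hX i)

theorem mem_candT {R M : Type*} [CommRing R] [AddCommGroup M] [Module R M] {m : ℕ} (a : ℕ →₀ M) :
    Module.AEval'.of (shiftMap R M) a ∈ candT R M m ↔ ∀ i, a i ∈ socleSeries R M (m - i) := by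
  change (∀ i, (Module.AEval'.of (shiftMap R M)).symm _ i ∈ _) ↔ _
  simp only [LinearEquiv.symm_apply_apply]

theorem X_pow_smul_of_eq {R M : Type*} [CommRing R] [AddCommGroup M] [Module R M] (a : ℕ →₀ M) :
    ∃ k : ℕ, (X : R[X]) ^ k • Module.AEval'.of (shiftMap R M) a = 0 := by
  have h : ∀ k : ℕ, (X : R[X]) ^ k • Module.AEval'.of (shiftMap R M) a =
      Module.AEval'.of (shiftMap R M) ((shiftMap R M)^[k] a) := by
    intro k
    induction k with
    | zero => simp
    | succ k ih =>
      rw [pow_succ', mul_smul, ih, Module.AEval'.X_smul_of, Function.iterate_succ_apply']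
  have h2 : ∀ k n : ℕ, ((shiftMap R M)^[k] a) n = a (n + k) := by
    intro k
    induction k with
    | zero => intro n; rfl
    | succ k ih =>
      intro n
      rw [Function.iterate_succ_apply', shiftMap_apply', ih]
      congr 1; omega
  refine ⟨a.support.sup id + 1, ?_⟩
  rw [h]
  have : (shiftMap R M)^[a.support.sup id + 1] a = 0 := by
    ext n
    rw [h2]
    by_contra hne
    have := Finset.le_sup (f := id) (Finsupp.mem_support_iff.2 hne)
    simp only [id] at this
    omega
  rw [this, map_zero]

theorem socleSeries_eq_candT (R M : Type*) [CommRing R] [AddCommGroup M] [Module R M] (m : ℕ) :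
    socleSeries R[X] (DividedPowersModule R M) m = candT R M m := by
  induction m with
  | zero =>
    ext v
    obtain ⟨a, rfl⟩ := (Module.AEval'.of (shiftMap R M)).surjective v
    rw [mem_candT]
    simp only [socleSeries, Nat.zero_sub, Submodule.mem_bot, LinearEquiv.map_eq_zero_iff]
    exact Finsupp.ext_iff
  | succ m ih =>
    apply le_antisymm
    · apply socleSeries_succ_le_of
      · rw [ih]
        intro v
        obtain ⟨a, rfl⟩ := (Module.AEval'.of (shiftMap R M)).surjective v
        rw [mem_candT, mem_candT]
        intro h i
        exact (monotone_nat_of_le_succ socleSeries_mono_succ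
          (by omega : m - i ≤ m + 1 - i) : socleSeries R M _ ≤ _) (h i)
      · intro v J hJ hv
        rw [ih] at hv
        obtain ⟨a, rfl⟩ := (Module.AEval'.of (shiftMap R M)).surjective v
        obtain ⟨k, hk⟩ := X_pow_smul_of_eq (R := R) a
        rw [mem_candT]
        by_cases hX : (X : R[X]) ∈ J
        · have h1 := hv X hX
          rw [Module.AEval'.X_smul_of, mem_candT] at h1
          intro i
          cases i with
          | succ i =>
            have := h1 i
            rw [shiftMap_apply'] at this
            rwa [Nat.add_sub_add_right]
          | zero =>
            have hI : (J.comap (C : R →+* R[X])).IsMaximal := by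
              rw [Ideal.isMaximal_iff]
              constructor
              · intro h
                apply hJ.ne_top
                rw [Ideal.eq_top_iff_one]
                simpa using h
              · intro I x hle hx hxI
                obtain ⟨p, j, hj, hpj⟩ := hJ.exists_inv (x := C x) (by simpa using hx)
                have hm : C (1 - p.coeff 0 * x) ∈ J := by
                  have e : C (1 - p.coeff 0 * x) = j + p.divX * C x * X := by
                    have := p.divX_mul_X_add
                    rw [map_sub, map_mul, map_one, ← hpj]
                    nth_rewrite 1 [← this]
                    ring
                  rw [e]
                  exact J.add_mem hj (J.mul_mem_left _ hX)
                have h3 := I.add_mem (hle hm) (I.mul_mem_left (p.coeff 0) hxI)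
                simpa using h3
            refine mem_socleSeries_succ_of hI fun r hr => ?_
            have h4 := hv (C r) hr
            rw [Module.AEval.C_smul, ← map_smul, mem_candT] at h4
            exact h4 0
        · have hXk : (X : R[X]) ^ k ∉ J := fun h => hX (hJ.isPrime.mem_of_pow_mem k h)
          obtain ⟨p, j, hj, hpj⟩ := hJ.exists_inv hXk
          have h5 := hv j hj
          have h6 : j • Module.AEval'.of (shiftMap R M) a = Module.AEval'.of (shiftMap R M) a := by
            conv_rhs => rw [← one_smul R[X] (Module.AEval'.of (shiftMap R M) a), ← hpj, add_smul,
              mul_smul, hk, smul_zero, zero_add]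
          rw [h6, mem_candT] at h5
          intro i
          exact (monotone_nat_of_le_succ socleSeries_mono_succ
            (by omega : m - i ≤ m + 1 - i) : socleSeries R M _ ≤ _) (h5 i)
    · intro v
      obtain ⟨a, rfl⟩ := (Module.AEval'.of (shiftMap R M)).surjective v
      rw [mem_candT]
      intro h
      rw [← Finsupp.sum_single a, Finsupp.sum, map_sum]
      refine Submodule.sum_mem _ fun i _ => ?_
      by_cases him : m < i
      · have := h i
        rw [Nat.sub_eq_zero_of_le (by omega : m + 1 ≤ i)] at this
        have h0 : a i = 0 := by simpa [socleSeries] using this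
        rw [h0]; simp
      · obtain ⟨k, rfl⟩ := Nat.exists_eq_add_of_le (not_lt.1 him)
        have hai := h i
        rw [show i + k + 1 - i = k + 1 by omega] at hai
        have hsing : ∀ (j : ℕ) (b : M), b ∈ socleSeries R M (i + k - j) →
            Module.AEval'.of (shiftMap R M) (Finsupp.single j b) ∈ candT R M (i + k) := by
          intro j b hb
          rw [mem_candT]
          intro l
          by_cases hl : j = l
          · subst hl; simpa using hb
          · rw [Finsupp.single_eq_of_ne (by tauto)]; exact zero_mem _
        let P : Submodule R M :=
          { carrier := {x | Module.AEval'.of (shiftMap R M) (Finsupp.single i x) ∈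
              socleSeries R[X] (DividedPowersModule R M) (i + k + 1)}
            zero_mem' := by simp
            add_mem' := by
              intro x y hx hy
              simp only [Set.mem_setOf_eq, Finsupp.single_add, map_add] at *
              exact add_mem hx hy
            smul_mem' := by
              intro r x hx
              simp only [Set.mem_setOf_eq] at *
              rw [← Finsupp.smul_single, map_smul, ← Module.AEval.C_smul]
              exact Submodule.smul_mem _ _ hx }
        have hP : socleSeries R M (k + 1) ≤ P := by
          apply socleSeries_succ_le_of
          · intro x hx
            apply socleSeries_mono_succ
            rw [ih]
            apply hsing
            rwa [show i + k - i = k by omega]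
          · intro b I hI hb
            have hb1 := mem_socleSeries_succ_of hI hb
            have hJ : (I.comap (constantCoeff : R[X] →+* R)).IsMaximal :=
              Ideal.comap_isMaximal_of_surjective _ constantCoeff_surjective
            refine mem_socleSeries_succ_of hJ fun p hp => ?_
            rw [ih, ← p.divX_mul_X_add, add_smul, mul_smul]
            refine add_mem (Submodule.smul_mem _ _ ?_) ?_
            · rw [Module.AEval'.X_smul_of]
              cases i with
              | zero =>
                have : shiftMap R M (Finsupp.single 0 b) = 0 := by
                  ext n; rw [shiftMap_apply']; simp
                rw [this, map_zero]; exact zero_mem _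
              | succ i =>
                have : shiftMap R M (Finsupp.single (i + 1) b) = Finsupp.single i b := by
                  ext n; rw [shiftMap_apply']; simp [Finsupp.single_apply]
                rw [this]
                apply hsing
                rwa [show i + 1 + k - i = k + 1 by omega]
            · rw [Module.AEval.C_smul, ← map_smul, Finsupp.smul_single]
              apply hsing
              rw [show i + k - i = k by omega]
              exact hb _ hp
        exact hP hai

/-- For `R` commutative noetherian and `m ≥ 1`, an element `a` of `N = M[X⁻¹]` lies in
`S_m(N)` iff `a i ∈ S_{m-i}(M)` for `0 ≤ i ≤ m−1` and `a i = 0` for `i ≥ m`. -/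
theorem socleSeries_dividedPowers (R M : Type*) [CommRing R] [IsNoetherianRing R]
    [AddCommGroup M] [Module R M] (m : ℕ) (hm : 1 ≤ m) :
    ∀ a : ℕ →₀ M,
      Module.AEval'.of (shiftMap R M) a
          ∈ socleSeries (Polynomial R) (DividedPowersModule R M) m ↔
        ((∀ i : ℕ, i < m → a i ∈ socleSeries R M (m - i)) ∧
          (∀ i : ℕ, m ≤ i → a i = 0)) := by
  intro a
  rw [socleSeries_eq_candT, mem_candT]
  constructor
  · intro h
    refine ⟨fun i _ => h i, fun i hi => ?_⟩
    have := h i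
    rw [Nat.sub_eq_zero_of_le hi] at this
    simpa [socleSeries] using this
  · rintro ⟨h1, h2⟩ i
    by_cases hi : i < m
    · exact h1 i hi
    · rw [h2 i (not_lt.1 hi)]; exact zero_mem _
end

section
/- Let R be a commutative noetherian ring, M an R-module, and N the R[X]-module of finitely supported sequences a : ℕ → M, where R acts componentwise and (X·a)(n) = a(n+1) for all n. Then M is an injective R-module if and only if N is an injective R[X]-module. -/
open Polynomial

universe uR uM uY

/-- The `n`-th coefficient of an element of the module of divided powers. -/
noncomputable def dpCoeff (R M : Type*) [CommRing R] [AddCommGroup M] [Module R M] (n : ℕ) :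
    DividedPowersModule R M →ₗ[R] M :=
  Finsupp.lapply n ∘ₗ (Module.AEval'.of (shiftMap R M)).symm.toLinearMap

section
variable {R : Type uR} {M : Type uM} [CommRing R] [AddCommGroup M] [Module R M]

theorem dpCoeff_of (n : ℕ) (a : ℕ →₀ M) :
    dpCoeff R M n (Module.AEval'.of (shiftMap R M) a) = a n := by
  simp [dpCoeff]

theorem dp_ext {a b : DividedPowersModule R M}
    (h : ∀ n, dpCoeff R M n a = dpCoeff R M n b) : a = b := by
  apply (Module.AEval'.of (shiftMap R M)).symm.injective
  ext n
  exact h n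

theorem dpCoeff_X_smul (n : ℕ) (a : DividedPowersModule R M) :
    dpCoeff R M n ((X : R[X]) • a) = dpCoeff R M (n + 1) a := by
  obtain ⟨a, rfl⟩ := (Module.AEval'.of (shiftMap R M)).surjective a
  rw [Module.AEval'.X_smul_of, dpCoeff_of, dpCoeff_of]
  rfl

theorem dpCoeff_X_pow_smul (k n : ℕ) (a : DividedPowersModule R M) :
    dpCoeff R M n ((X ^ k : R[X]) • a) = dpCoeff R M (n + k) a := by
  induction k generalizing n with
  | zero => simp
  | succ k ih => rw [pow_succ', mul_smul, dpCoeff_X_smul, ih, add_assoc, add_comm 1 k]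

theorem dp_torsion (a : DividedPowersModule R M) : ∃ k : ℕ, (X ^ k : R[X]) • a = 0 := by
  obtain ⟨a, rfl⟩ := (Module.AEval'.of (shiftMap R M)).surjective a
  refine ⟨a.support.sup id + 1, dp_ext fun n => ?_⟩
  rw [dpCoeff_X_pow_smul, dpCoeff_of, map_zero]
  by_contra h
  have := Finset.le_sup (f := id) (Finsupp.mem_support_iff.2 h)
  simp only [id] at this
  omega

/-- An `R`-linear map commuting with `X` is `R[X]`-linear. -/
theorem exists_polyLinear {Z W : Type*} [AddCommGroup Z] [AddCommGroup W] [Module R Z]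
    [Module R W] [Module R[X] Z] [Module R[X] W] [IsScalarTower R R[X] Z]
    [IsScalarTower R R[X] W] (F : Z →ₗ[R] W) (hF : ∀ z, F ((X : R[X]) • z) = (X : R[X]) • F z) :
    ∃ G : Z →ₗ[R[X]] W, ∀ z, G z = F z := by
  refine ⟨{ toFun := F, map_add' := F.map_add, map_smul' := ?_ }, fun z => rfl⟩
  intro p
  induction p using Polynomial.induction_on with
  | C a => intro z; simp [C_eq_algebraMap]
  | add p q hp hq => intro z; simp_all [add_smul]
  | monomial n a h =>
    intro z
    simp only [RingHom.id_apply] at h ⊢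
    rw [pow_succ, ← mul_assoc, mul_smul _ X, mul_smul _ X, h, hF]

theorem dp_lift {Z : Type*} [AddCommGroup Z] [Module R Z] [Module R[X] Z]
    [IsScalarTower R R[X] Z] (m : ℕ) (hm : ∀ z : Z, (X ^ m : R[X]) • z = 0) (φ : Z →ₗ[R] M) :
    ∃ G : Z →ₗ[R[X]] DividedPowersModule R M,
      ∀ z n, dpCoeff R M n (G z) = φ ((X ^ n : R[X]) • z) := by
  classical
  have hv : ∀ z : Z, ∀ n, φ ((X ^ n : R[X]) • z) ≠ 0 → n ∈ Finset.range m := by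
    intro z n h
    by_contra hn
    apply h
    rw [Finset.mem_range, not_lt] at hn
    rw [← Nat.sub_add_cancel hn, pow_add, mul_smul, hm, smul_zero, map_zero]
  let F : Z →ₗ[R] DividedPowersModule R M :=
    (Module.AEval'.of (shiftMap R M)).toLinearMap ∘ₗ
      { toFun := fun z => Finsupp.onFinset (Finset.range m) (fun n => φ ((X ^ n : R[X]) • z)) (hv z)
        map_add' := fun x y => by ext n; simp
        map_smul' := fun r x => by
          ext n
          simp [smul_comm _ r x] }
  have hFc : ∀ z n, dpCoeff R M n (F z) = φ ((X ^ n : R[X]) • z) := by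
    intro z n
    simp only [F, LinearMap.comp_apply, LinearEquiv.coe_coe]
    rw [dpCoeff_of]
    rfl
  obtain ⟨G, hG⟩ := exists_polyLinear F (fun z => dp_ext fun n => by
    rw [dpCoeff_X_smul, hFc, hFc, pow_succ, mul_smul])
  exact ⟨G, fun z n => by rw [hG, hFc]⟩

theorem dp_extend_fg [IsNoetherianRing R] (hM : Module.Injective R M)
    {Y : Type uM} [AddCommGroup Y] [Module R[X] Y] [Module.Finite R[X] Y]
    (S : Submodule R[X] Y) (g : S →ₗ[R[X]] DividedPowersModule R M) :
    ∃ h : Y →ₗ[R[X]] DividedPowersModule R M, ∀ s : S, h s = g s := by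
  let _ : Module R Y := Module.compHom Y (algebraMap R R[X])
  have : IsScalarTower R R[X] Y := IsScalarTower.of_algebraMap_smul fun _ _ => rfl
  -- uniform torsion bound
  obtain ⟨k, hk⟩ : ∃ k : ℕ, ∀ s, (X ^ k : R[X]) • g s = 0 := by
    let c : ℕ →o Submodule R[X] S :=
      { toFun := fun k => LinearMap.ker ((X ^ k : R[X]) • g)
        monotone' := by
          intro a b hab s hs
          simp only [LinearMap.mem_ker, LinearMap.smul_apply] at hs ⊢
          rw [← Nat.sub_add_cancel hab, pow_add, mul_smul, hs, smul_zero] }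
    obtain ⟨k, hk⟩ := monotone_stabilizes_iff_noetherian.2 (inferInstance : IsNoetherian R[X] S) c
    refine ⟨k, fun s => ?_⟩
    obtain ⟨j, hj⟩ := dp_torsion (g s)
    have h1 : s ∈ c (max k j) := c.monotone (le_max_right k j) (by
      change s ∈ LinearMap.ker ((X ^ j : R[X]) • g)
      simpa using hj)
    rw [← hk _ (le_max_left k j)] at h1
    change s ∈ LinearMap.ker ((X ^ k : R[X]) • g) at h1
    simpa using h1
  obtain ⟨k0, hk0⟩ := Ideal.exists_pow_inf_eq_pow_smul (Ideal.span {(X : R[X])}) S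
  have hAR := hk0 (k + k0) (by omega)
  rw [Nat.add_sub_cancel, Ideal.span_singleton_pow, Ideal.span_singleton_pow,
    Ideal.span_singleton_pow] at hAR
  set T : Submodule R[X] Y := Ideal.span {(X ^ (k + k0) : R[X])} • ⊤ with hT
  let q : S →ₗ[R[X]] (Y ⧸ T) := T.mkQ ∘ₗ S.subtype
  have hq : LinearMap.ker q ≤ LinearMap.ker g := by
    rintro ⟨s, hs⟩ hsq
    have hsT : s ∈ T := by simpa [q] using hsq
    have h2 : s ∈ T ⊓ S := ⟨hsT, hs⟩
    rw [hAR, Submodule.ideal_span_singleton_smul] at h2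
    obtain ⟨t, ht, hts⟩ := h2
    have : (⟨s, hs⟩ : S) = (X ^ k : R[X]) • ⟨t, ht.2⟩ := Subtype.ext hts.symm
    rw [LinearMap.mem_ker, this, map_smul, hk]
  let i : (S ⧸ LinearMap.ker q) →ₗ[R[X]] (Y ⧸ T) := (LinearMap.ker q).liftQ q le_rfl
  have hi : Function.Injective i := LinearMap.ker_eq_bot.1 (Submodule.ker_liftQ_eq_bot' _ _ rfl)
  let g' : (S ⧸ LinearMap.ker q) →ₗ[R[X]] DividedPowersModule R M := (LinearMap.ker q).liftQ g hq
  obtain ⟨φ, hφ⟩ := hM.out (i.restrictScalars R) hi (dpCoeff R M 0 ∘ₗ g'.restrictScalars R)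
  obtain ⟨G, hG⟩ := dp_lift (k + k0) (fun z : Y ⧸ T => by
    obtain ⟨y, rfl⟩ := T.mkQ_surjective z
    rw [← map_smul, Submodule.mkQ_apply, Submodule.Quotient.mk_eq_zero, hT]
    exact Submodule.smul_mem_smul (Ideal.mem_span_singleton_self _) trivial) φ
  refine ⟨G ∘ₗ T.mkQ, fun s => dp_ext fun n => ?_⟩
  have h3 := hφ ((LinearMap.ker q).mkQ ((X ^ n : R[X]) • s))
  have h4 : (i.restrictScalars R) ((LinearMap.ker q).mkQ ((X ^ n : R[X]) • s))
      = (X ^ n : R[X]) • T.mkQ (s : Y) := rfl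
  rw [h4] at h3
  rw [LinearMap.comp_apply, hG, h3]
  change dpCoeff R M 0 (g ((X ^ n : R[X]) • s)) = _
  rw [map_smul, dpCoeff_X_pow_smul, zero_add]

end

/-- If a module is injective relative to finitely generated modules (in its own universe), then it
is injective. -/
theorem injective_of_fg {A : Type uR} {Q : Type uM} [CommRing A] [AddCommGroup Q] [Module A Q]
    (H : ∀ (Y : Type uM) [AddCommGroup Y] [Module A Y] [Module.Finite A Y]
      (S : Submodule A Y) (g : S →ₗ[A] Q), ∃ h : Y →ₗ[A] Q, ∀ s : S, h s = g s) :
    Module.Injective A Q := by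
  refine ⟨fun X Y _ _ _ _ f hf g => ?_⟩
  have : Fact (Function.Injective f) := ⟨hf⟩
  let E := Module.Baer.extensionOfMax f g
  have hmax := Module.Baer.extensionOfMax_is_max f g
  have htop : ∀ y : Y, y ∈ E.domain := by
    intro y
    let P := Submodule.span A {y}
    have : Module.Finite A P := Module.Finite.span_singleton A y
    let S : Submodule A P := E.domain.comap P.subtype
    let j : S →ₗ[A] E.domain := (P.subtype ∘ₗ S.subtype).codRestrict E.domain (fun s => s.2)
    obtain ⟨h, hh⟩ := H P S (E.toLinearPMap.toFun ∘ₗ j)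
    let p : Y →ₗ.[A] Q := ⟨P, h⟩
    have hc : ∀ (x : E.domain) (z : p.domain), (x : Y) = z → E.toLinearPMap x = p z := by
      rintro ⟨x, hx⟩ ⟨z, hz⟩ hxz
      simp only at hxz
      subst hxz
      exact (hh ⟨⟨x, hz⟩, hx⟩).symm
    let L := E.toLinearPMap.sup p hc
    have hle : E.toLinearPMap ≤ L := LinearPMap.left_le_sup _ _ hc
    let E' : Module.Baer.ExtensionOf f g :=
      { L with
        le := E.le.trans hle.1
        is_extension := fun m => (E.is_extension m).trans (hle.2 rfl) }
    have heq : E' = E := hmax E' hle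
    rw [← heq]
    exact (LinearPMap.right_le_sup _ _ hc).1 (Submodule.mem_span_singleton_self y)
  refine ⟨E.toLinearPMap.toFun ∘ₗ LinearMap.id.codRestrict E.domain htop, fun x => ?_⟩
  exact (E.is_extension x).symm

/-- For `R` commutative noetherian, `M` is an injective `R`-module if and only if the
module of divided powers `N = M[X⁻¹]` is an injective `R[X]`-module. -/
theorem injective_iff_dividedPowers_injective (R M : Type*) [CommRing R]
    [IsNoetherianRing R] [AddCommGroup M] [Module R M] :
    Module.Injective R M ↔
      Module.Injective (Polynomial R) (DividedPowersModule R M) := by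
  constructor
  · intro hM
    exact injective_of_fg fun Y _ _ _ S g => dp_extend_fg hM S g
  · intro hN
    refine ⟨fun A B _ _ _ _ f hf g => ?_⟩
    let oA := Module.AEval'.of (0 : A →ₗ[R] A)
    let oB := Module.AEval'.of (0 : B →ₗ[R] B)
    obtain ⟨f', hf'⟩ := exists_polyLinear
      (oB.toLinearMap ∘ₗ f ∘ₗ oA.symm.toLinearMap) (fun z => by
        obtain ⟨a, rfl⟩ := oA.surjective z
        simp [oA, oB, Module.AEval'.X_smul_of])
    obtain ⟨g', hg'⟩ := exists_polyLinear
      ((Module.AEval'.of (shiftMap R M)).toLinearMap ∘ₗ Finsupp.lsingle 0 ∘ₗ g ∘ₗ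
        oA.symm.toLinearMap) (fun z => by
        obtain ⟨a, rfl⟩ := oA.surjective z
        refine dp_ext fun n => ?_
        rw [dpCoeff_X_smul]
        simp [oA, Module.AEval'.X_smul_of, dpCoeff_of])
    obtain ⟨h, hh⟩ := hN.out f' (fun x y hxy => by
      rw [hf', hf'] at hxy
      exact oA.symm.injective (hf (oB.injective hxy))) g'
    refine ⟨dpCoeff R M 0 ∘ₗ h.restrictScalars R ∘ₗ oB.toLinearMap, fun x => ?_⟩
    have h1 := hh (oA x)
    rw [hf', hg'] at h1
    simp only [LinearMap.comp_apply, LinearEquiv.coe_coe, LinearEquiv.symm_apply_apply] at h1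
    simp only [LinearMap.comp_apply, LinearEquiv.coe_coe, LinearMap.restrictScalars_apply]
    rw [h1, dpCoeff_of]
    simp
end

section
/- Let p be a prime and m ≥ 2, and let P_m be the ℤ[X]-module with underlying abelian group ℤ/p^mℤ × ℤ/p^{m−1}ℤ × ⋯ × ℤ/pℤ, where X acts by (X·a)(n) = p·a(n+1) for 0 ≤ n ≤ m−2 (here p·a(n+1) denotes the image of a(n+1) under the additive homomorphism ℤ/p^{m−1−n}ℤ → ℤ/p^{m−n}ℤ induced by multiplication by p on ℤ) and (X·a)(m−1) = 0. Then the intersection of all maximal ℤ[X]-submodules of P_m equals p·P_m, and this submodule equals S_{m−1}(P_m), the (m−1)-st socle series member of P_m. -/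
open Polynomial

theorem aux_simple_zero {S : Type*} [AddCommGroup S] [Module ℤ[X] S]
    [IsSimpleModule ℤ[X] S] (r : ℤ[X]) (N : ℕ) (h : ∀ s : S, r ^ N • s = 0) (s : S) :
    r • s = 0 := by
  rcases LinearMap.bijective_or_eq_zero (LinearMap.lsmul ℤ[X] S r) with hb | h0
  · have hinj : ∀ (k : ℕ) (t : S), r ^ k • t = 0 → t = 0 := by
      intro k
      induction k with
      | zero => intro t ht; simpa using ht
      | succ k ih =>
        intro t ht
        rw [pow_succ, mul_smul] at ht
        have h1 := ih _ ht
        apply hb.1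
        simpa using h1
    rw [hinj N s (h s), smul_zero]
  · have := LinearMap.congr_fun h0 s
    simpa using this

theorem aux_smul_eval {Q : Type*} [AddCommGroup Q] [Module ℤ[X] Q] (q : Q)
    (h : (X : ℤ[X]) • q = 0) (f : ℤ[X]) : f • q = (f.coeff 0 : ℤ) • q := by
  have h1 : f • q = (X * f.divX + C (f.coeff 0)) • q := by
    rw [X_mul_divX_add]
  rw [h1, add_smul, mul_comm, mul_smul, h, smul_zero, zero_add]
  have : (C (f.coeff 0) : ℤ[X]) = ((f.coeff 0 : ℤ) : ℤ[X]) := by simp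
  rw [this, Int.cast_smul_eq_zsmul]

theorem aux_mem_socle {Q : Type*} [AddCommGroup Q] [Module ℤ[X] Q] (p : ℕ) (hp : p.Prime)
    (N : ℕ) (h1 : ∀ q : Q, (p : ℤ[X]) ^ N • q = 0) (h2 : ∀ q : Q, (X : ℤ[X]) ^ N • q = 0)
    (q : Q) : q ∈ socle ℤ[X] Q ↔ (p : ℤ[X]) • q = 0 ∧ (X : ℤ[X]) • q = 0 := by
  constructor
  · intro hq
    have hle : ∀ r : ℤ[X], (∀ q : Q, r ^ N • q = 0) →
        socle ℤ[X] Q ≤ LinearMap.ker (LinearMap.lsmul ℤ[X] Q r) := by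
      intro r hr
      refine sSup_le ?_
      intro S hS x hx
      have : IsSimpleModule ℤ[X] S := hS
      have := aux_simple_zero (S := S) r N
        (fun s => Subtype.ext (by simpa using hr s)) ⟨x, hx⟩
      simpa using congrArg Subtype.val this
    exact ⟨by simpa using hle _ h1 hq, by simpa using hle _ h2 hq⟩
  · rintro ⟨hp0, hX0⟩
    by_cases hq : q = 0
    · subst hq; exact zero_mem _
    have hpz : (p : ℤ) • q = 0 := by
      rw [natCast_zsmul, ← Nat.cast_smul_eq_nsmul ℤ[X], hp0]
    have hs : IsSimpleModule ℤ[X] (Submodule.span ℤ[X] {q}) := by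
      rw [isSimpleModule_iff_isAtom]
      refine ⟨by simpa using hq, ?_⟩
      intro B hB
      rw [Submodule.eq_bot_iff]
      intro x hx
      by_contra hx0
      apply hB.not_ge
      rw [Submodule.span_singleton_le_iff_mem]
      obtain ⟨f, rfl⟩ := Submodule.mem_span_singleton.1 (hB.le hx)
      have hf := aux_smul_eval q hX0 f
      have hnd : ¬ (p : ℤ) ∣ f.coeff 0 := by
        rintro ⟨c, hc⟩
        apply hx0
        rw [hf, hc, mul_comm, mul_smul, hpz, smul_zero]
      have hcop : IsCoprime (p : ℤ) (f.coeff 0) :=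
        ((Nat.prime_iff_prime_int.1 hp).coprime_iff_not_dvd).2 hnd
      obtain ⟨u, v, huv⟩ := hcop
      have : q = v • (f • q) := by
        rw [hf, ← mul_smul]
        calc q = (1 : ℤ) • q := (one_smul _ _).symm
          _ = _ := by rw [← huv, add_smul, mul_smul, hpz, smul_zero, zero_add]
      rw [this]
      exact B.toAddSubgroup.zsmul_mem hx v
    exact (le_sSup (a := Submodule.span ℤ[X] {q}) hs) (Submodule.mem_span_singleton_self q)

theorem aux_mem_series {M : Type*} [AddCommGroup M] [Module ℤ[X] M] (p : ℕ) (hp : p.Prime)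
    (N : ℕ) (h1 : ∀ q : M, (p : ℤ[X]) ^ N • q = 0) (h2 : ∀ q : M, (X : ℤ[X]) ^ N • q = 0)
    (k : ℕ) (q : M) : q ∈ socleSeries ℤ[X] M (k + 1) ↔
      (p : ℤ[X]) • q ∈ socleSeries ℤ[X] M k ∧ (X : ℤ[X]) • q ∈ socleSeries ℤ[X] M k := by
  rw [socleSeries, Submodule.mem_comap, aux_mem_socle p hp N]
  · rw [← map_smul, ← map_smul]
    rw [Submodule.mkQ_apply, Submodule.mkQ_apply, Submodule.Quotient.mk_eq_zero,
      Submodule.Quotient.mk_eq_zero]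
  · intro y
    obtain ⟨x, rfl⟩ := Submodule.mkQ_surjective _ y
    rw [← map_smul, h1, map_zero]
  · intro y
    obtain ⟨x, rfl⟩ := Submodule.mkQ_surjective _ y
    rw [← map_smul, h2, map_zero]

theorem aux_val_dvd (p m l k c b : ℕ) (hc : c ≤ k) (hz : (p ^ (m - l)) ≠ 0) :
    p ^ (m - l + c) ∣ p ^ k * ((b : ZMod (p ^ (m - l))).val) ↔
      p ^ (m - l + c) ∣ p ^ k * b := by
  have hd : p ^ (m - l + c) ∣ p ^ k * p ^ (m - l) := by
    rw [← pow_add]; exact pow_dvd_pow _ (by omega)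
  rw [ZMod.val_natCast]
  conv_rhs => rw [← Nat.mod_add_div b (p ^ (m - l)), mul_add, ← mul_assoc]
  exact (Nat.dvd_add_left (hd.mul_right _)).symm

/-- Let `P_m = ℤ/p^mℤ × ⋯ × ℤ/pℤ` be the `ℤ[X]`-module in which `X` acts by
`(X • a) n = p • a (n+1)` (push forward along multiplication by `p`) and
`(X • a) (m-1) = 0`.  The intersection of all maximal `ℤ[X]`-submodules of `P_m`
equals `p·P_m`, and this submodule equals `S_{m-1}(P_m)`. -/
theorem radical_of_Pm (p : ℕ) (hp : p.Prime) (m : ℕ) (hm : 2 ≤ m)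
    [Module (Polynomial ℤ) ((i : Fin m) → ZMod (p ^ (m - (i : ℕ))))]
    [IsScalarTower ℤ (Polynomial ℤ) ((i : Fin m) → ZMod (p ^ (m - (i : ℕ))))]
    (hX : ∀ (a : (i : Fin m) → ZMod (p ^ (m - (i : ℕ)))) (n : Fin m),
      ((X : Polynomial ℤ) • a) n =
        if h : (n : ℕ) + 1 < m then
          (p : ZMod (p ^ (m - (n : ℕ)))) *
            (((a ⟨(n : ℕ) + 1, h⟩).val : ℕ) : ZMod (p ^ (m - (n : ℕ))))
        else 0) :
    ((sInf {S : Submodule (Polynomial ℤ) ((i : Fin m) → ZMod (p ^ (m - (i : ℕ)))) |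
        IsCoatom S} : Submodule (Polynomial ℤ) ((i : Fin m) → ZMod (p ^ (m - (i : ℕ)))))
          : Set ((i : Fin m) → ZMod (p ^ (m - (i : ℕ)))))
        = {x | ∃ a : (i : Fin m) → ZMod (p ^ (m - (i : ℕ))), x = (p : ℤ) • a} ∧
    sInf {S : Submodule (Polynomial ℤ) ((i : Fin m) → ZMod (p ^ (m - (i : ℕ)))) |
        IsCoatom S}
      = socleSeries (Polynomial ℤ) ((i : Fin m) → ZMod (p ^ (m - (i : ℕ)))) (m - 1) := by
  classical
  have hz : ∀ i, p ^ (m - i) ≠ 0 := fun i => pow_ne_zero _ hp.ne_zero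
  have hne : ∀ i, NeZero (p ^ (m - i)) := fun i => ⟨hz i⟩
  set M := (i : Fin m) → ZMod (p ^ (m - (i : ℕ))) with hM
  have hpv : ∀ (a : M) (n : Fin m), ((p : ℤ[X]) • a) n =
      ((p * (a n).val : ℕ) : ZMod (p ^ (m - (n : ℕ)))) := by
    intro a n
    rw [Nat.cast_smul_eq_nsmul, Pi.smul_apply, nsmul_eq_mul]
    simp
  have hXv : ∀ (a : M) (n : Fin m) (h : (n : ℕ) + 1 < m), ((X : ℤ[X]) • a) n =
      ((p * (a ⟨(n : ℕ) + 1, h⟩).val : ℕ) : ZMod (p ^ (m - (n : ℕ)))) := by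
    intro a n h
    rw [hX, dif_pos h]; push_cast; rfl
  have hXp : ∀ a : M, ∃ b : M, (X : ℤ[X]) • a = (p : ℤ[X]) • b := by
    intro a
    refine ⟨fun n => if h : (n : ℕ) + 1 < m then
      (((a ⟨(n : ℕ) + 1, h⟩).val : ℕ) : ZMod (p ^ (m - (n : ℕ)))) else 0, ?_⟩
    funext n
    rw [hX, Nat.cast_smul_eq_nsmul, Pi.smul_apply, nsmul_eq_mul]
    split_ifs <;> simp
  have h1 : ∀ q : M, (p : ℤ[X]) ^ m • q = 0 := by
    intro q
    rw [← Nat.cast_pow, Nat.cast_smul_eq_nsmul]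
    funext n
    rw [Pi.smul_apply, nsmul_eq_mul, Pi.zero_apply,
      (ZMod.natCast_eq_zero_iff _ _).2 (pow_dvd_pow p (Nat.sub_le m n)), zero_mul]
  have h2' : ∀ (k : ℕ) (q : M), ∃ b : M, (X : ℤ[X]) ^ k • q = (p : ℤ[X]) ^ k • b := by
    intro k
    induction k with
    | zero => intro q; exact ⟨q, by simp⟩
    | succ k ih =>
      intro q
      obtain ⟨c, hc⟩ := hXp q
      obtain ⟨b, hb⟩ := ih c
      refine ⟨b, ?_⟩
      rw [pow_succ, mul_smul, hc, smul_comm, hb, ← mul_smul, pow_succ']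
  have h2 : ∀ q : M, (X : ℤ[X]) ^ m • q = 0 := by
    intro q
    obtain ⟨b, hb⟩ := h2' m q
    rw [hb, h1]
  -- explicit socle series
  have hS : ∀ (k : ℕ) (a : M), a ∈ socleSeries ℤ[X] M k ↔
      ∀ l : Fin m, p ^ (m - (l : ℕ) + min k (l : ℕ)) ∣ p ^ k * (a l).val := by
    intro k
    induction k with
    | zero =>
      intro a
      rw [socleSeries, Submodule.mem_bot]
      constructor
      · rintro rfl l; rw [Pi.zero_apply]; simp
      · intro h
        funext l
        have := h l
        simp only [Nat.zero_min, add_zero, pow_zero, one_mul] at this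
        rw [← ZMod.natCast_eq_zero_iff, ZMod.natCast_zmod_val] at this
        exact this
    | succ k ih =>
      intro a
      rw [aux_mem_series p hp m h1 h2, ih, ih]
      have e1 : ∀ l : Fin m, p ^ (m - (l : ℕ) + min k (l : ℕ)) ∣
          p ^ k * (((p : ℤ[X]) • a) l).val ↔
          p ^ (m - (l : ℕ) + min k (l : ℕ)) ∣ p ^ (k + 1) * (a l).val := by
        intro l
        rw [hpv, aux_val_dvd _ _ _ _ _ _ (min_le_left _ _) (hz _), ← mul_assoc, ← pow_succ]
      have e2 : ∀ (l : Fin m) (h : (l : ℕ) + 1 < m), p ^ (m - (l : ℕ) + min k (l : ℕ)) ∣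
          p ^ k * (((X : ℤ[X]) • a) l).val ↔
          p ^ (m - (l : ℕ) + min k (l : ℕ)) ∣ p ^ (k + 1) * (a ⟨(l : ℕ) + 1, h⟩).val := by
        intro l h
        rw [hXv a l h, aux_val_dvd _ _ _ _ _ _ (min_le_left _ _) (hz _), ← mul_assoc,
          ← pow_succ]
      constructor
      · rintro ⟨ha, hb⟩ ⟨l, hl⟩
        cases l with
        | zero => simpa using (e1 ⟨0, hl⟩).1 (ha ⟨0, hl⟩)
        | succ l =>
          have := (e2 ⟨l, by omega⟩ hl).1 (hb ⟨l, by omega⟩)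
          refine dvd_trans (pow_dvd_pow _ ?_) this
          simp only
          omega
      · intro h
        refine ⟨fun l => (e1 l).2 (dvd_trans (pow_dvd_pow _ (by omega)) (h l)), fun l => ?_⟩
        by_cases hl : (l : ℕ) + 1 < m
        · refine (e2 l hl).2 (dvd_trans (pow_dvd_pow _ ?_) (h ⟨(l : ℕ) + 1, hl⟩))
          simp only
          omega
        · rw [hX, dif_neg hl]; simp
  have hS' : ∀ a : M, a ∈ socleSeries ℤ[X] M (m - 1) ↔ ∀ l : Fin m, p ∣ (a l).val := by
    intro a
    rw [hS]
    refine forall_congr' fun l => ?_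
    have hl := l.2
    have : m - (l : ℕ) + min (m - 1) (l : ℕ) = (m - 1) + 1 := by omega
    rw [this, pow_succ]
    exact Nat.mul_dvd_mul_iff_left (pow_pos hp.pos _)
  have hpM : ∀ a : M, (∃ b : M, a = (p : ℤ) • b) ↔ ∀ l : Fin m, p ∣ (a l).val := by
    intro a
    constructor
    · rintro ⟨b, rfl⟩ l
      have : ((p : ℤ) • b) l = ((p * (b l).val : ℕ) : ZMod (p ^ (m - (l : ℕ)))) := by
        rw [Pi.smul_apply, zsmul_eq_mul]
        simp
      rw [this, ZMod.val_natCast, Nat.dvd_mod_iff (dvd_pow_self p (by have := l.2; omega))]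
      exact dvd_mul_right _ _
    · intro h
      choose c hc using h
      refine ⟨fun l => (c l : ZMod (p ^ (m - (l : ℕ)))), ?_⟩
      funext l
      rw [Pi.smul_apply, ← ZMod.natCast_zmod_val (a l), hc l]
      simp
  have hI : ∀ a : M, a ∈ sInf {S : Submodule ℤ[X] M | IsCoatom S} ↔
      ∀ l : Fin m, p ∣ (a l).val := by
    intro a
    constructor
    · intro ha l
      have hdl : p ∣ p ^ (m - (l : ℕ)) := dvd_pow_self p (by have := l.2; omega)
      let φ : M →+ ZMod p :=
        (ZMod.castHom hdl (ZMod p)).toAddMonoidHom.comp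
          (Pi.evalAddMonoidHom (fun i : Fin m => ZMod (p ^ (m - (i : ℕ)))) l)
      have hφv : ∀ x : M, φ x = (((x l).val : ℕ) : ZMod p) := by
        intro x
        have : φ x = ZMod.castHom hdl (ZMod p) (x l) := rfl
        rw [this]
        conv_lhs => rw [← ZMod.natCast_zmod_val (x l)]
        rw [map_natCast]
      have hφp : ∀ x : M, φ ((p : ℤ[X]) • x) = 0 := by
        intro x
        rw [Nat.cast_smul_eq_nsmul, map_nsmul, nsmul_eq_mul, ZMod.natCast_self, zero_mul]
      have hφ : ∀ (f : ℤ[X]) (x : M), φ (f • x) = (f.coeff 0 : ℤ) • φ x := by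
        intro f x
        have e : f • x = (X * f.divX + C (f.coeff 0)) • x := by rw [X_mul_divX_add]
        have e' : (C (f.coeff 0) : ℤ[X]) = ((f.coeff 0 : ℤ) : ℤ[X]) := by simp
        obtain ⟨b, hb⟩ := hXp (f.divX • x)
        rw [e, add_smul, mul_smul, hb, map_add, hφp, zero_add, e', Int.cast_smul_eq_zsmul,
          map_zsmul]
      let K : Submodule ℤ[X] M :=
        { carrier := {x | φ x = 0}
          add_mem' := by
            intro x y hx hy
            simp only [Set.mem_ofPred_eq] at *
            rw [map_add, hx, hy, add_zero]
          zero_mem' := by simp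
          smul_mem' := by
            intro f x hx
            simp only [Set.mem_ofPred_eq] at *
            rw [hφ, hx, smul_zero] }
      have hKm : ∀ x, x ∈ K ↔ φ x = 0 := fun x => Iff.rfl
      have : Fact p.Prime := ⟨hp⟩
      have hK : IsCoatom K := by
        constructor
        · intro h
          have h3 : (Pi.single l 1 : M) ∈ K := by rw [h]; trivial
          rw [hKm] at h3
          have h4 : φ (Pi.single l 1 : M) = 1 := by
            have : φ (Pi.single l 1 : M) = ZMod.castHom hdl (ZMod p) ((Pi.single l 1 : M) l) := rfl
            rw [this, Pi.single_eq_same, map_one]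
          rw [h4] at h3
          exact one_ne_zero h3
        · intro B hB
          obtain ⟨x, hxB, hxK⟩ := SetLike.exists_of_lt hB
          rw [hKm] at hxK
          rw [eq_top_iff]
          intro y _
          have hy : y - ((φ y * (φ x)⁻¹).val : ℕ) • x ∈ K := by
            rw [hKm, map_sub, map_nsmul, nsmul_eq_mul, ZMod.natCast_zmod_val, mul_assoc,
              inv_mul_cancel₀ hxK, mul_one, sub_self]
          have := B.add_mem (hB.le hy) (B.toAddSubgroup.nsmul_mem hxB (φ y * (φ x)⁻¹).val)
          simpa using this
      have := (Submodule.mem_sInf.1 ha) K hK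
      rw [hKm, hφv, ZMod.natCast_eq_zero_iff] at this
      exact this
    · intro ha
      obtain ⟨b, rfl⟩ := (hpM a).2 ha
      rw [Submodule.mem_sInf]
      intro S hSc
      have hs : IsSimpleModule ℤ[X] (M ⧸ S) := isSimpleModule_iff_isCoatom.2 hSc
      have := aux_simple_zero (S := M ⧸ S) (p : ℤ[X]) m (by
        intro y
        obtain ⟨x, rfl⟩ := Submodule.mkQ_surjective _ y
        rw [← map_smul, h1, map_zero]) (S.mkQ b)
      rw [← map_smul, Submodule.mkQ_apply, Submodule.Quotient.mk_eq_zero,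
        Nat.cast_smul_eq_nsmul] at this
      rw [natCast_zsmul]
      exact this
  constructor
  · ext a
    rw [SetLike.mem_coe, hI, Set.mem_ofPred_eq, hpM]
  · ext a
    rw [hI, hS']
end

section
/- Let p be a prime and m ≥ 1, and let P_m be the ℤ[X]-module with underlying abelian group ℤ/p^mℤ × ℤ/p^{m−1}ℤ × ⋯ × ℤ/pℤ, where X acts by (X·a)(n) = p·a(n+1) for 0 ≤ n ≤ m−2 (here p·a(n+1) denotes the image of a(n+1) under the additive homomorphism ℤ/p^{m−1−n}ℤ → ℤ/p^{m−n}ℤ induced by multiplication by p on ℤ) and (X·a)(m−1) = 0. Then: (i) P_m is generated as a ℤ[X]-module by m elements but cannot be generated by m−1 elements; (ii) every proper ℤ[X]-submodule of P_m can be generated by at most m−1 elements. -/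
open Polynomial

theorem aux_nak {M : Type*} [AddCommGroup M] [Module ℤ[X] M] (I : Ideal ℤ[X]) (N : Submodule ℤ[X] M)
    (h : N ⊔ I • (⊤ : Submodule ℤ[X] M) = ⊤) (k : ℕ)
    (hk : ∀ q ∈ I ^ k, ∀ x : M, q • x = 0) : N = ⊤ := by
  have key : ∀ j : ℕ, N ⊔ (I ^ j) • (⊤ : Submodule ℤ[X] M) = ⊤ := by
    intro j
    induction j with
    | zero => simp
    | succ j ih =>
      rw [eq_top_iff]
      conv_lhs => rw [← ih]
      refine sup_le le_sup_left ?_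
      conv_lhs => rw [← h]
      rw [Submodule.smul_sup, ← Submodule.mul_smul, ← pow_succ]
      exact sup_le_sup_right Submodule.smul_le_right _
  have h0 : (I ^ k) • (⊤ : Submodule ℤ[X] M) = ⊥ := by
    rw [eq_bot_iff, Submodule.smul_le]
    intro q hq x _
    simp [hk q hq x]
  have := key k
  rwa [h0, sup_bot_eq] at this

theorem aux_card {A : Type*} [AddCommGroup A] [Finite A] (f : A →+ A) :
    f.range.index = Nat.card f.ker := by
  have h1 := f.ker.card_mul_index
  have h2 := f.range.card_mul_index
  rw [AddSubgroup.index_ker] at h1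
  have h3 : 0 < Nat.card f.range := Nat.card_pos
  rw [← h1, mul_comm] at h2
  exact Nat.eq_of_mul_eq_mul_right h3 h2

theorem aux_basis0 {K Q : Type*} [Field K] [AddCommGroup Q] [Finite Q] [Module K Q] :
    ∃ r : ℕ, Nat.card Q = Nat.card K ^ r ∧ ∃ b : Fin r → Q,
      ∀ T : Submodule K Q, (∀ i, b i ∈ T) → ∀ x, x ∈ T := by
  have hfin : Module.Finite K Q := Module.Finite.of_finite
  refine ⟨Module.finrank K Q, ?_, fun i => Module.finBasis K Q i, ?_⟩
  · rw [Module.natCard_eq_pow_finrank (K := K) (V := Q)]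
  · intro T hT x
    have h1 : (⊤ : Submodule K Q) ≤ T := by
      rw [← (Module.finBasis K Q).span_eq, Submodule.span_le]
      rintro _ ⟨i, rfl⟩
      exact hT i
    exact h1 (Submodule.mem_top (x := x))

theorem aux_basis {Q : Type*} [AddCommGroup Q] [Finite Q] (p : ℕ) (hp : p.Prime)
    (hQ : ∀ x : Q, p • x = 0) : ∃ r : ℕ, Nat.card Q = p ^ r ∧ ∃ b : Fin r → Q,
      ∀ T : AddSubgroup Q, (∀ i, b i ∈ T) → ∀ x, x ∈ T := by
  have : Fact p.Prime := ⟨hp⟩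
  let inst : Module (ZMod p) Q := AddCommGroup.zmodModule hQ
  obtain ⟨r, hr, b, hb⟩ := @aux_basis0 (ZMod p) Q _ _ _ inst
  rw [Nat.card_zmod] at hr
  exact ⟨r, hr, b, fun T hT x => hb (AddSubgroup.toZModSubmodule p T) hT x⟩

theorem aux_main {M : Type*} [AddCommGroup M] [Module ℤ[X] M] [Finite M] (p : ℕ) (hp : p.Prime)
    (m : ℕ) (k : ℕ) (hm : 1 ≤ m)
    (hk : ∀ q ∈ (Ideal.span {(p : ℤ[X]), X}) ^ k, ∀ x : M, q • x = 0)
    (hc : Nat.card (nsmulAddMonoidHom (α := M) p).ker ≤ p ^ m)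
    (S : Submodule ℤ[X] M) :
    (∃ G : Finset M, G.card ≤ m - 1 ∧ Submodule.span ℤ[X] (G : Set M) = S) ∨
    ((∀ x : M, p • x = 0 → x ∈ S) ∧ ∀ s ∈ S, ∃ t ∈ S, (X : ℤ[X]) • s = p • t) := by
  classical
  have : Fact p.Prime := ⟨hp⟩
  set I : Ideal ℤ[X] := Ideal.span {(p : ℤ[X]), X} with hI
  have hpI : (p : ℤ[X]) ∈ I := Ideal.subset_span (by simp)
  have hXI : (X : ℤ[X]) ∈ I := Ideal.subset_span (by simp)
  set B : Submodule ℤ[X] S := I • ⊤ with hB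
  have hpB : ∀ s : S, p • s ∈ B := by
    intro s
    rw [← Nat.cast_smul_eq_nsmul ℤ[X]]
    exact Submodule.smul_mem_smul hpI trivial
  have hXB : ∀ s : S, (X : ℤ[X]) • s ∈ B := fun s => Submodule.smul_mem_smul hXI trivial
  have hQ : ∀ x : S ⧸ B, p • x = 0 := by
    intro x
    obtain ⟨s, rfl⟩ := Submodule.Quotient.mk_surjective B x
    rw [← Submodule.Quotient.mk_smul, Submodule.Quotient.mk_eq_zero]
    exact hpB s
  have : Finite (S ⧸ B) := Quotient.finite _
  obtain ⟨r, hcard, b, hb⟩ := aux_basis p hp hQ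
  by_cases hr : r ≤ m - 1
  · left
    choose g hg using fun i => Submodule.Quotient.mk_surjective B (b i)
    have hN : Submodule.span ℤ[X] (Set.range g) ⊔ B = ⊤ := by
      rw [eq_top_iff]
      intro s _
      obtain ⟨t, ht, hts⟩ := hb
        ((Submodule.span ℤ[X] (Set.range g)).map B.mkQ).toAddSubgroup
        (fun i => ⟨g i, Submodule.subset_span ⟨i, rfl⟩, hg i⟩) (B.mkQ s)
      have h2 : s - t ∈ B := by
        rw [← Submodule.Quotient.mk_eq_zero, Submodule.Quotient.mk_sub, sub_eq_zero]
        exact hts.symm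
      rw [← add_sub_cancel t s]
      exact Submodule.add_mem_sup ht h2
    have hT := aux_nak I _ hN k (fun q hq x => Subtype.ext (hk q hq x))
    refine ⟨Finset.univ.image fun i => (g i : M), ?_, ?_⟩
    · exact Finset.card_image_le.trans (by simpa using hr)
    · have := congrArg (Submodule.map S.subtype) hT
      rw [Submodule.map_span, Submodule.map_top, Submodule.range_subtype, ← Set.range_comp] at this
      refine Eq.trans ?_ this
      simp [Function.comp_def]
  · right
    have hr' : p ^ m ≤ B.toAddSubgroup.index := by
      change p ^ m ≤ Nat.card (S ⧸ B)
      rw [hcard]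
      exact Nat.pow_le_pow_right hp.pos (by omega)
    set φ := nsmulAddMonoidHom (α := S) p with hφ
    set ψ := nsmulAddMonoidHom (α := M) p with hψ
    have hle : φ.range ≤ B.toAddSubgroup := by
      rintro _ ⟨s, rfl⟩
      exact hpB s
    have hi : B.toAddSubgroup.index ≤ φ.range.index :=
      Nat.le_of_dvd (Nat.pos_of_ne_zero AddSubgroup.index_ne_zero_of_finite)
        (AddSubgroup.index_dvd_of_le hle)
    have hφc := aux_card φ
    have hmap : φ.ker.map S.subtype.toAddMonoidHom ≤ ψ.ker := by
      rintro _ ⟨s, hs, rfl⟩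
      have h3 : p • s = 0 := hs
      change p • (s : M) = 0
      exact congrArg Subtype.val h3
    have hmc : Nat.card (φ.ker.map S.subtype.toAddMonoidHom) = Nat.card φ.ker :=
      Nat.card_image_of_injective (f := (S.subtype.toAddMonoidHom : S → M)) Subtype.val_injective _
    have hmle : Nat.card (φ.ker.map S.subtype.toAddMonoidHom) ≤ Nat.card ψ.ker :=
      AddSubgroup.card_le_of_le hmap
    have heq : φ.ker.map S.subtype.toAddMonoidHom = ψ.ker :=
      AddSubgroup.eq_of_le_of_card_ge hmap (by omega)
    have heqi : B.toAddSubgroup.index = φ.range.index := by omega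
    have heqB : φ.range = B.toAddSubgroup := by
      apply AddSubgroup.eq_of_le_of_card_ge hle
      have e1 := φ.range.card_mul_index
      have e2 := B.toAddSubgroup.card_mul_index
      rw [heqi, ← e1] at e2
      exact (Nat.eq_of_mul_eq_mul_right
        (Nat.pos_of_ne_zero AddSubgroup.index_ne_zero_of_finite) e2).le
    constructor
    · intro x hx
      have : x ∈ ψ.ker := hx
      rw [← heq] at this
      obtain ⟨s, _, rfl⟩ := this
      exact s.2
    · intro s hs
      have : (X : ℤ[X]) • (⟨s, hs⟩ : S) ∈ φ.range := by
        rw [heqB]; exact hXB _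
      obtain ⟨t, ht⟩ := this
      exact ⟨t, t.2, (congrArg Subtype.val ht).symm⟩

theorem aux_nil {M : Type*} [AddCommGroup M] [Module ℤ[X] M] (p : ℕ) (m : ℕ)
    (hpm : ∀ x : M, (p ^ m) • x = 0) (hX : ∀ a : M, ∃ b : M, (X : ℤ[X]) • a = p • b) :
    ∀ q ∈ (Ideal.span {(p : ℤ[X]), X}) ^ m, ∀ x : M, q • x = 0 := by
  set I : Ideal ℤ[X] := Ideal.span {(p : ℤ[X]), X} with hI
  set J : Ideal ℤ[X] := Ideal.span {(p : ℤ[X])} with hJ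
  have h1 : I • (⊤ : Submodule ℤ[X] M) ≤ J • ⊤ := by
    rw [hI, Ideal.span, Submodule.span_smul_eq, Submodule.set_smul_le_iff]
    rintro r x hr -
    have hb : ∀ b : M, p • b ∈ J • (⊤ : Submodule ℤ[X] M) := by
      intro b
      rw [← Nat.cast_smul_eq_nsmul ℤ[X]]
      exact Submodule.smul_mem_smul (Ideal.subset_span rfl) trivial
    rcases hr with rfl | rfl
    · rw [Nat.cast_smul_eq_nsmul ℤ[X]]; exact hb x
    · obtain ⟨b, hb'⟩ := hX x
      rw [hb']; exact hb b
  have h2 : ∀ j, I ^ j • (⊤ : Submodule ℤ[X] M) ≤ J ^ j • ⊤ := by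
    intro j
    induction j with
    | zero => simp
    | succ j ih =>
      rw [pow_succ, Submodule.mul_smul]
      refine (Submodule.smul_mono le_rfl h1).trans ?_
      rw [← Submodule.mul_smul, mul_comm, Submodule.mul_smul, pow_succ', Submodule.mul_smul]
      exact Submodule.smul_mono le_rfl ih
  intro q hq x
  have h3 := h2 m (Submodule.smul_mem_smul hq (Submodule.mem_top (x := x)))
  rw [hJ, Ideal.span_singleton_pow, Submodule.ideal_span_singleton_smul] at h3
  obtain ⟨y, -, hy⟩ := h3
  rw [← hy]
  change ((p : ℤ[X]) ^ m) • y = 0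
  rw [← Nat.cast_pow, Nat.cast_smul_eq_nsmul, hpm]

theorem aux_notgen {M : Type*} [AddCommGroup M] [Module ℤ[X] M] (p : ℕ) (hp : p.Prime) (m : ℕ)
    (hm : 1 ≤ m) (hX : ∀ a : M, ∃ b : M, (X : ℤ[X]) • a = p • b)
    (f : M →+ (Fin m → ZMod p)) (hf : Function.Surjective f)
    (G : Finset M) (hG : G.card ≤ m - 1) (h : Submodule.span ℤ[X] (G : Set M) = ⊤) : False := by
  classical
  have : Fact p.Prime := ⟨hp⟩
  have hfX : ∀ a, f ((X : ℤ[X]) • a) = 0 := by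
    intro a
    obtain ⟨b, hb⟩ := hX a
    rw [hb, map_nsmul]
    ext i; simp
  have hfs : ∀ (q : ℤ[X]) (a : M), f (q • a) = (q.coeff 0) • f a := by
    intro q a
    conv_lhs => rw [← Polynomial.divX_mul_X_add q]
    rw [add_smul, map_add, mul_comm, mul_smul, hfX, zero_add]
    rw [← map_zsmul]
    congr 1
    rw [← Int.cast_smul_eq_zsmul ℤ[X]]
    simp
  have hall : ∀ a : M, f a ∈ Submodule.span (ZMod p) ((G.image f : Finset _) : Set (Fin m → ZMod p)) := by
    intro a
    have ha : a ∈ Submodule.span ℤ[X] (G : Set M) := h ▸ trivial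
    induction ha using Submodule.span_induction with
    | mem x hx => exact Submodule.subset_span (by simpa using ⟨x, hx, rfl⟩)
    | zero => simp
    | add x y _ _ hx hy => rw [map_add]; exact add_mem hx hy
    | smul q x _ hx => rw [hfs]; exact zsmul_mem hx _
  have htop : Submodule.span (ZMod p) ((G.image f : Finset _) : Set (Fin m → ZMod p)) = ⊤ := by
    rw [eq_top_iff]
    intro v _
    obtain ⟨a, rfl⟩ := hf v
    exact hall a
  have := finrank_span_finset_le_card (R := ZMod p) (G.image f)
  rw [Set.finrank, htop, finrank_top, Module.finrank_fin_fun] at this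
  have h5 : (G.image f).card ≤ G.card := Finset.card_image_le
  omega

/-- Let `P_m = ℤ/p^mℤ × ⋯ × ℤ/pℤ` be the `ℤ[X]`-module in which `X` acts by
`(X • a) n = p • a (n+1)` (push forward along multiplication by `p`) and
`(X • a) (m-1) = 0`.  Then: (i) `P_m` is generated by `m` elements but not by `m − 1`
elements; (ii) every proper `ℤ[X]`-submodule of `P_m` is generated by at most `m − 1`
elements. -/
theorem generators_of_Pm (p : ℕ) (hp : p.Prime) (m : ℕ) (hm : 1 ≤ m)
    [Module (Polynomial ℤ) ((i : Fin m) → ZMod (p ^ (m - (i : ℕ))))]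
    [IsScalarTower ℤ (Polynomial ℤ) ((i : Fin m) → ZMod (p ^ (m - (i : ℕ))))]
    (hX : ∀ (a : (i : Fin m) → ZMod (p ^ (m - (i : ℕ)))) (n : Fin m),
      ((X : Polynomial ℤ) • a) n =
        if h : (n : ℕ) + 1 < m then
          (p : ZMod (p ^ (m - (n : ℕ)))) *
            (((a ⟨(n : ℕ) + 1, h⟩).val : ℕ) : ZMod (p ^ (m - (n : ℕ))))
        else 0) :
    ((∃ G : Finset ((i : Fin m) → ZMod (p ^ (m - (i : ℕ)))), G.card ≤ m ∧
        Submodule.span (Polynomial ℤ) (G : Set ((i : Fin m) → ZMod (p ^ (m - (i : ℕ)))))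
          = ⊤) ∧
      ¬ (∃ G : Finset ((i : Fin m) → ZMod (p ^ (m - (i : ℕ)))), G.card ≤ m - 1 ∧
        Submodule.span (Polynomial ℤ) (G : Set ((i : Fin m) → ZMod (p ^ (m - (i : ℕ)))))
          = ⊤)) ∧
    (∀ S : Submodule (Polynomial ℤ) ((i : Fin m) → ZMod (p ^ (m - (i : ℕ)))),
      S ≠ ⊤ →
        ∃ G : Finset ((i : Fin m) → ZMod (p ^ (m - (i : ℕ)))), G.card ≤ m - 1 ∧
          Submodule.span (Polynomial ℤ) (G : Set ((i : Fin m) → ZMod (p ^ (m - (i : ℕ)))))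
            = S) := by
  classical
  have : Fact p.Prime := ⟨hp⟩
  have : NeZero p := ⟨hp.ne_zero⟩
  have hfin : Finite ((i : Fin m) → ZMod (p ^ (m - (i : ℕ)))) := inferInstance
  have hX' : ∀ a : (i : Fin m) → ZMod (p ^ (m - (i : ℕ))), ∃ b : (i : Fin m) → ZMod (p ^ (m - (i : ℕ))),
      (X : ℤ[X]) • a = p • b := by
    intro a
    refine ⟨fun n => if h : (n : ℕ) + 1 < m then
      (((a ⟨(n : ℕ) + 1, h⟩).val : ℕ) : ZMod (p ^ (m - (n : ℕ)))) else 0, ?_⟩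
    funext n
    rw [hX, Pi.smul_apply]
    split_ifs <;> simp
  have hpm : ∀ x : (i : Fin m) → ZMod (p ^ (m - (i : ℕ))), (p ^ m) • x = 0 := by
    intro x
    funext n
    rw [Pi.smul_apply, nsmul_eq_mul, (ZMod.natCast_eq_zero_iff _ _).2 (pow_dvd_pow p (Nat.sub_le m n))]
    simp
  have hdvd : ∀ i : Fin m, p ∣ p ^ (m - (i : ℕ)) := fun i => dvd_pow_self p (by omega)
  let f : ((i : Fin m) → ZMod (p ^ (m - (i : ℕ)))) →+ (Fin m → ZMod p) :=
    { toFun := fun a i => ZMod.castHom (hdvd i) (ZMod p) (a i)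
      map_zero' := by funext i; simp only [Pi.zero_apply, map_zero]
      map_add' := fun a b => by funext i; simp only [Pi.add_apply, map_add] }
  have hf : Function.Surjective f := by
    intro v
    choose g hg using fun i => ZMod.castHom_surjective (hdvd i) (v i)
    exact ⟨g, funext hg⟩
  have hker : f.ker ≤ (nsmulAddMonoidHom (α := (i : Fin m) → ZMod (p ^ (m - (i : ℕ)))) p).range := by
    intro a ha
    have h1 : ∀ i, ∃ y, p • y = a i := by
      intro i
      have h2 : ZMod.castHom (hdvd i) (ZMod p) (a i) = 0 := congrFun ha i
      rw [← ZMod.natCast_zmod_val (a i), map_natCast, ZMod.natCast_eq_zero_iff] at h2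
      obtain ⟨c, hc⟩ := h2
      refine ⟨(c : ZMod _), ?_⟩
      rw [← ZMod.natCast_zmod_val (a i), hc]
      simp
    choose y hy using h1
    exact ⟨y, funext hy⟩
  have hc : Nat.card (nsmulAddMonoidHom (α := (i : Fin m) → ZMod (p ^ (m - (i : ℕ)))) p).ker ≤ p ^ m := by
    rw [← aux_card]
    refine (Nat.le_of_dvd (Nat.pos_of_ne_zero AddSubgroup.index_ne_zero_of_finite)
        (AddSubgroup.index_dvd_of_le hker)).trans ?_
    rw [AddSubgroup.index_ker]
    refine (AddSubgroup.card_le_card_addGroup _).trans ?_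
    simp
  let e : Fin m → ((i : Fin m) → ZMod (p ^ (m - (i : ℕ)))) := fun k => Pi.single k 1
  have htop : ∀ S : Submodule ℤ[X] ((i : Fin m) → ZMod (p ^ (m - (i : ℕ)))),
      (∀ k, e k ∈ S) → S = ⊤ := by
    intro S hS
    rw [eq_top_iff]
    intro a _
    have : a = ∑ k, (a k).val • e k := by
      conv_lhs => rw [← Finset.univ_sum_single a]
      refine Finset.sum_congr rfl fun k _ => ?_
      change _ = _ • Pi.single k 1
      rw [← Pi.single_smul, nsmul_eq_mul, mul_one, ZMod.natCast_zmod_val]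
    rw [this]
    exact sum_mem fun k _ => nsmul_mem (hS k) _
  refine ⟨⟨⟨Finset.univ.image e, ?_, ?_⟩, ?_⟩, ?_⟩
  · exact Finset.card_image_le.trans (by simp)
  · exact htop _ fun k => Submodule.subset_span (by simp)
  · rintro ⟨G, hG, h⟩
    exact aux_notgen p hp m hm hX' f hf G hG h
  · intro S hS
    rcases aux_main p hp m m hm (aux_nil p m hpm hX') hc S with h | ⟨h1, h2⟩
    · exact h
    · exfalso
      apply hS
      apply htop
      have key : ∀ j : ℕ, ∀ k : Fin m, (k : ℕ) + 1 + j = m → e k ∈ S := by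
        intro j
        induction j with
        | zero =>
          intro k hk
          apply h1
          change p • Pi.single k 1 = 0
          rw [← Pi.single_smul, nsmul_eq_mul, mul_one, (ZMod.natCast_eq_zero_iff _ _).2, Pi.single_zero]
          rw [show m - (k : ℕ) = 1 by omega, pow_one]
        | succ j ih =>
          intro k hk
          have hk1 : (k : ℕ) + 1 < m := by omega
          obtain ⟨t, ht, hXt⟩ := h2 _ (ih ⟨k + 1, hk1⟩ (by simp only; omega))
          have hXe : (X : ℤ[X]) • e ⟨k + 1, hk1⟩ = p • e k := by
            funext n
            rw [hX, Pi.smul_apply]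
            by_cases hn : n = k
            · subst hn
              have : Fact (1 < p ^ (m - ((n : ℕ) + 1))) :=
                ⟨Nat.one_lt_pow (by omega) hp.one_lt⟩
              rw [dif_pos hk1]
              simp only [e, Pi.single_eq_same]
              rw [ZMod.val_one, nsmul_eq_mul, Nat.cast_one]
            · have : e k n = 0 := Pi.single_eq_of_ne hn _
              rw [this, smul_zero]
              split_ifs with h
              · have h0 : e ⟨k + 1, hk1⟩ ⟨n + 1, h⟩ = 0 := by
                  apply Pi.single_eq_of_ne
                  intro hh
                  apply hn
                  have := congrArg Fin.val hh
                  ext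
                  simp only at this
                  omega
                rw [h0]
                simp
              · rfl
          have h3 : e k - t ∈ S := by
            apply h1
            rw [smul_sub, ← hXe, hXt, sub_self]
          simpa using add_mem h3 ht
      intro k
      exact key (m - 1 - k) k (by omega)
end

section
/- Let p be a prime and let Q be a ℤ[X]-module that is cocyclic with socle isomorphic to ℤ[X]/(p, X) (the simple ℤ[X]-module on which p and X act as zero) and with |Q| = p⁶. Then Q can be generated by at most three elements, and if Q cannot be generated by two elements then Q is isomorphic to P₃, the ℤ[X]-module with underlying abelian group ℤ/p³ℤ × ℤ/p²ℤ × ℤ/pℤ on which X acts by X·(a₀,a₁,a₂) = (p·a₁, p·a₂, 0) (where p·a₁ and p·a₂ denote the images of a₁ and a₂ under the additive homomorphisms ℤ/p²ℤ → ℤ/p³ℤ and ℤ/pℤ → ℤ/p²ℤ induced by multiplication by p on ℤ). -/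
open Polynomial

section aux
variable {Q : Type*} [AddCommGroup Q] [Module ℤ[X] Q]

theorem aux_nilp [Finite Q] (s : Q) (hs : s ≠ 0) (hxs : (X : ℤ[X]) • s = 0)
    (hmin : ∀ q : Q, q ≠ 0 → ∃ f : ℤ[X], f • q = s) :
    ∃ n : ℕ, ∀ q : Q, (X ^ n : ℤ[X]) • q = 0 := by
  obtain ⟨i, j, hij, h⟩ := Finite.exists_ne_map_eq_of_infinite
    (fun (i : ℕ) (q : Q) => (X ^ i : ℤ[X]) • q)
  wlog hlt : i < j generalizing i j
  · exact this j i hij.symm h.symm (by omega)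
  refine ⟨i, fun q => ?_⟩
  by_contra hy
  obtain ⟨f, hf⟩ := hmin _ hy
  obtain ⟨d, rfl⟩ := Nat.exists_eq_add_of_lt hlt
  have h1 := congrFun h q
  apply hs
  rw [← hf, h1, ← mul_smul]
  have : f * (X : ℤ[X]) ^ (i + d + 1) = X ^ d * (X * (f * X ^ i)) := by ring
  rw [this, mul_smul, mul_smul, mul_smul, hf, hxs, smul_zero]

theorem aux_nak_s18 (A : Submodule ℤ[X] Q) (r : ℤ[X]) (n : ℕ) (hr : ∀ q : Q, (r ^ n) • q = 0)
    (h : ∀ q : Q, ∃ a ∈ A, ∃ q', q = a + r • q') : A = ⊤ := by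
  have key : ∀ k : ℕ, ∀ q : Q, ∃ a ∈ A, ∃ q', q = a + (r ^ k) • q' := by
    intro k
    induction k with
    | zero => intro q; exact ⟨0, A.zero_mem, q, by simp⟩
    | succ k ih =>
      intro q
      obtain ⟨a, ha, q', rfl⟩ := ih q
      obtain ⟨b, hb, q'', rfl⟩ := h q'
      refine ⟨a + r ^ k • b, A.add_mem ha (A.smul_mem _ hb), q'', ?_⟩
      rw [smul_add, ← mul_smul, pow_succ, add_assoc]
  rw [eq_top_iff]
  intro q _
  obtain ⟨a, ha, q', rfl⟩ := key n q
  simpa [hr] using ha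

theorem aux_card_lt {p : ℕ} (hp : p.Prime) (hcard : Nat.card Q = p ^ 6)
    (A B : Submodule ℤ[X] Q) (h : A < B) : p * Nat.card A ≤ Nat.card B := by
  have : Finite Q := Nat.finite_of_card_ne_zero (by rw [hcard]; exact pow_ne_zero _ hp.ne_zero)
  have h1 : Nat.card A ∣ Nat.card B := AddSubgroup.card_dvd_of_le
    (H := A.toAddSubgroup) (K := B.toAddSubgroup) h.le
  have h2 : Nat.card B ∣ p ^ 6 := hcard ▸ AddSubgroup.card_addSubgroup_dvd_card B.toAddSubgroup
  have h3 : Nat.card A < Nat.card B := Set.Finite.card_lt_card (Set.toFinite (B : Set Q)) h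
  obtain ⟨k, hk, hB⟩ := (Nat.dvd_prime_pow hp).1 h2
  obtain ⟨j, hj, hA⟩ := (Nat.dvd_prime_pow hp).1 (h1.trans h2)
  rw [hA, hB] at h3 ⊢
  have := (Nat.pow_lt_pow_iff_right hp.one_lt).1 h3
  rw [← pow_succ']
  exact Nat.pow_le_pow_right hp.pos this

theorem aux_soc {p : ℕ} (hp : p.Prime) (s : Q) (hs : s ≠ 0) (hps : (C (p : ℤ) : ℤ[X]) • s = 0)
    (hmin : ∀ q : Q, q ≠ 0 → ∃ f : ℤ[X], f • q = s) (q : Q)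
    (h1 : (C (p : ℤ) : ℤ[X]) • q = 0) (h2 : (X : ℤ[X]) • q = 0) :
    ∃ k : Fin p, q = (C (k : ℤ) : ℤ[X]) • s := by
  have := Fact.mk hp
  by_cases hq : q = 0
  · exact ⟨⟨0, hp.pos⟩, by simp [hq]⟩
  obtain ⟨f, hf⟩ := hmin q hq
  rw [← divX_mul_X_add f, add_smul, mul_smul, h2, smul_zero, zero_add] at hf
  set a := f.coeff 0
  have hcop : IsCoprime (p : ℤ) a := by
    rw [Prime.coprime_iff_not_dvd (Nat.prime_iff_prime_int.1 hp)]
    rintro ⟨c, hc⟩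
    apply hs
    rw [← hf, hc, mul_comm, C_mul, mul_smul, h1, smul_zero]
  obtain ⟨u, v, huv⟩ := hcop
  have hv : (v % p).toNat < p := by
    have := Int.emod_lt_of_pos v (b := p) (by exact_mod_cast hp.pos)
    have := hp.pos
    omega
  refine ⟨⟨(v % p).toNat, hv⟩, ?_⟩
  have hpz : (p : ℤ) ≠ 0 := by exact_mod_cast hp.ne_zero
  have e1 : (((v % p).toNat : ℕ) : ℤ) = v % p := Int.toNat_of_nonneg (Int.emod_nonneg v hpz)
  have e2 : v % p = v - (v / p) * p := by rw [Int.emod_def]; ring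
  simp only [e1]
  rw [e2, C_sub, sub_smul, C_mul, mul_smul _ _ s, hps, smul_zero, sub_zero, ← hf, ← mul_smul, ← C_mul]
  have e3 : v * a = 1 - u * p := by linarith
  rw [e3, C_sub, sub_smul, C_mul, mul_smul _ _ q, h1]
  simp

theorem aux_two {p : ℕ} (hp : p.Prime) (hcard : Nat.card Q = p ^ 6)
    (s : Q) (hs : s ≠ 0) (hps : (C (p : ℤ) : ℤ[X]) • s = 0) (hxs : (X : ℤ[X]) • s = 0)
    (hmin : ∀ q : Q, q ≠ 0 → ∃ f : ℤ[X], f • q = s)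
    (l r u1 u2 v1 v2 w1 w2 : ℤ[X]) (hlx : (X : ℤ[X]) = u1 * l + u2 * r)
    (hlp : (C (p : ℤ) : ℤ[X]) = v1 * l + v2 * r) (hl : l = w1 * X + w2 * C (p : ℤ))
    (hr : ∀ q : Q, l • q = 0 → (r ^ 2) • q = 0) :
    ∃ G : Finset Q, G.card ≤ 2 ∧ Submodule.span ℤ[X] (G : Set Q) = ⊤ := by
  classical
  have : Finite Q := Nat.finite_of_card_ne_zero (by rw [hcard]; exact pow_ne_zero _ hp.ne_zero)
  -- the operator by l
  let L : Q →ₗ[ℤ[X]] Q := LinearMap.lsmul ℤ[X] Q l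
  let K := LinearMap.ker L
  have hK : ∀ q, q ∈ K ↔ l • q = 0 := fun q => by simp [K, L]
  let P : K →ₗ[ℤ[X]] K := LinearMap.lsmul ℤ[X] K r
  have soc : ∀ q : Q, l • q = 0 → r • q = 0 → ∃ k : Fin p, q = (C (k : ℤ) : ℤ[X]) • s := by
    intro q h1 h2
    apply aux_soc hp s hs hps hmin
    · rw [hlp, add_smul, mul_smul, mul_smul, h1, h2]; simp
    · rw [hlx, add_smul, mul_smul, mul_smul, h1, h2]; simp
  have bound : ∀ T : Submodule ℤ[X] K, (∀ t ∈ T, r • t = 0) → Nat.card T ≤ p := by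
    intro T hT
    have : ∀ t : T, ∃ k : Fin p, ((t : K) : Q) = (C (k : ℤ) : ℤ[X]) • s := by
      intro t
      apply soc _ ((hK _).1 t.1.2)
      have := congrArg Subtype.val (hT t t.2)
      simpa using this
    choose g hg using this
    have hinj : Function.Injective g := by
      intro a b hab
      apply Subtype.ext; apply Subtype.ext
      rw [hg, hg, hab]
    simpa using Nat.card_le_card_of_injective g hinj
  have hcK : Nat.card K ≤ p ^ 2 := by
    have h1 := Submodule.card_eq_card_quotient_mul_card (LinearMap.ker P)
    rw [Nat.card_congr P.quotKerEquivRange.toEquiv] at h1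
    rw [h1, pow_two]
    apply Nat.mul_le_mul
    · apply bound
      intro t ht
      simpa [P] using ht
    · apply bound
      rintro t ⟨y, rfl⟩
      apply Subtype.ext
      have := hr y ((hK _).1 y.2)
      simpa [P, pow_two, mul_smul] using this
  have hcR : p ^ 4 ≤ Nat.card (LinearMap.range L) := by
    have h1 := Submodule.card_eq_card_quotient_mul_card K
    rw [Nat.card_congr L.quotKerEquivRange.toEquiv, hcard] at h1
    have h2 : p ^ 2 * p ^ 4 ≤ p ^ 2 * Nat.card (LinearMap.range L) := by
      calc p ^ 2 * p ^ 4 = p ^ 6 := by ring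
        _ = _ := h1
        _ ≤ _ := Nat.mul_le_mul_right _ hcK
    exact Nat.le_of_mul_le_mul_left h2 (pow_pos hp.pos 2)
  let A := LinearMap.range (LinearMap.lsmul ℤ[X] Q X) ⊔ LinearMap.range (LinearMap.lsmul ℤ[X] Q (C (p : ℤ)))
  have hLA : LinearMap.range L ≤ A := by
    rintro _ ⟨q, rfl⟩
    have : L q = (X : ℤ[X]) • (w1 • q) + (C (p : ℤ) : ℤ[X]) • (w2 • q) := by
      simp only [L, LinearMap.lsmul_apply, ← mul_smul, ← add_smul]
      rw [hl]; congr 1; ring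
    rw [this]
    exact Submodule.add_mem_sup ⟨w1 • q, rfl⟩ ⟨w2 • q, rfl⟩
  have hcA : p ^ 4 ≤ Nat.card A := hcR.trans
    (Nat.card_le_card_of_injective _ (Submodule.inclusion_injective hLA))
  have main : ∃ u v : Q, A ⊔ Submodule.span ℤ[X] {u, v} = ⊤ := by
    by_contra! hne
    have hA : A < ⊤ := lt_top_iff_ne_top.2 (fun h => hne 0 0 (by rw [h]; simp))
    obtain ⟨u, -, hu⟩ := SetLike.exists_of_lt hA
    have hN : A ⊔ Submodule.span ℤ[X] {u} < ⊤ := lt_top_iff_ne_top.2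
      (fun h => hne u u (by simpa using h))
    obtain ⟨v, -, hv⟩ := SetLike.exists_of_lt hN
    have hM : A ⊔ Submodule.span ℤ[X] {u, v} < ⊤ := lt_top_iff_ne_top.2 (hne u v)
    have hsu : u ∈ Submodule.span ℤ[X] ({u} : Set Q) := Submodule.mem_span_singleton_self u
    have hsv : v ∈ Submodule.span ℤ[X] ({u, v} : Set Q) := Submodule.subset_span (by simp)
    have l1 : A < A ⊔ Submodule.span ℤ[X] {u} := lt_of_le_of_ne le_sup_left
      (fun h => hu (h ▸ Submodule.mem_sup_right hsu))
    have l2 : A ⊔ Submodule.span ℤ[X] {u} < A ⊔ Submodule.span ℤ[X] {u, v} := lt_of_le_of_ne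
      (sup_le_sup_left (Submodule.span_mono (by simp)) _)
      (fun h => hv (h ▸ Submodule.mem_sup_right hsv))
    have c1 := aux_card_lt hp hcard _ _ l1
    have c2 := aux_card_lt hp hcard _ _ l2
    have c3 := aux_card_lt hp hcard _ _ hM
    have c4 : Nat.card (⊤ : Submodule ℤ[X] Q) = p ^ 6 := by
      rw [← hcard]; exact Nat.card_congr Submodule.topEquiv.toEquiv
    rw [c4] at c3
    have : p * (p * (p * p ^ 4)) ≤ p ^ 6 := by
      refine le_trans ?_ c3
      refine Nat.mul_le_mul_left _ (le_trans ?_ c2)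
      exact Nat.mul_le_mul_left _ (le_trans (Nat.mul_le_mul_left _ hcA) c1)
    have h7 : p ^ 6 < p ^ 7 := Nat.pow_lt_pow_right hp.one_lt (by norm_num)
    have : p ^ 7 ≤ p ^ 6 := le_trans (le_of_eq (by ring)) this
    omega
  obtain ⟨u, v, huv⟩ := main
  obtain ⟨n, hn⟩ := aux_nilp s hs hxs hmin
  refine ⟨{u, v}, Finset.card_le_two, ?_⟩
  have hp6 : ∀ q : Q, ((C (p : ℤ) : ℤ[X]) ^ 6) • q = 0 := by
    intro q
    have : ((C (p : ℤ) : ℤ[X]) ^ 6) = ((p ^ 6 : ℕ) : ℤ[X]) := by simp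
    rw [this, Nat.cast_smul_eq_nsmul, ← hcard]
    exact card_nsmul_eq_zero'
  apply aux_nak_s18 _ _ n hn
  intro q
  have : Submodule.span ℤ[X] {u, v} ⊔ LinearMap.range (LinearMap.lsmul ℤ[X] Q X) = ⊤ := by
    apply aux_nak_s18 _ _ 6 hp6
    intro q
    have hq : q ∈ A ⊔ Submodule.span ℤ[X] {u, v} := huv ▸ Submodule.mem_top
    have e : A ⊔ Submodule.span ℤ[X] {u, v} = (Submodule.span ℤ[X] {u, v} ⊔ LinearMap.range (LinearMap.lsmul ℤ[X] Q X)) ⊔ LinearMap.range (LinearMap.lsmul ℤ[X] Q (C (p : ℤ))) := by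
      simp only [A]; rw [sup_comm, sup_assoc]
    rw [e] at hq
    obtain ⟨a, ha, _, ⟨q', rfl⟩, rfl⟩ := Submodule.mem_sup.1 hq
    exact ⟨a, ha, q', rfl⟩
  have hq : q ∈ Submodule.span ℤ[X] {u, v} ⊔ LinearMap.range (LinearMap.lsmul ℤ[X] Q X) :=
    this ▸ Submodule.mem_top
  obtain ⟨a, ha, _, ⟨q', rfl⟩, rfl⟩ := Submodule.mem_sup.1 hq
  exact ⟨a, by simpa using ha, q', rfl⟩

theorem aux_p6 {p : ℕ} (hcard : Nat.card Q = p ^ 6) (q : Q) :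
    (C ((p : ℤ) ^ 6) : ℤ[X]) • q = 0 := by
  have : (C ((p : ℤ) ^ 6) : ℤ[X]) = ((p ^ 6 : ℕ) : ℤ[X]) := by simp
  rw [this, Nat.cast_smul_eq_nsmul, ← hcard]
  exact card_nsmul_eq_zero'

theorem aux_int {p : ℕ} (hp : p.Prime) (c : ℤ) (hc : ¬ ((p : ℤ) ^ 3 ∣ c)) :
    ∃ a b : ℤ, (p : ℤ) ^ 2 = a * c + b * p ^ 6 := by
  have h1 : Int.gcd c (p ^ 6) ∣ p ^ 6 := by
    have := Int.gcd_dvd_natAbs_right c ((p : ℤ) ^ 6)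
    simpa [Int.natAbs_pow] using this
  obtain ⟨k, hk, hg⟩ := (Nat.dvd_prime_pow hp).1 h1
  have h2 : ((Int.gcd c (p ^ 6) : ℕ) : ℤ) ∣ c := Int.gcd_dvd_left ..
  have hk2 : k ≤ 2 := by
    by_contra! h
    apply hc
    refine dvd_trans ?_ h2
    rw [hg]
    push_cast
    exact pow_dvd_pow _ h
  have h3 := Int.gcd_eq_gcd_ab c (p ^ 6)
  rw [hg] at h3
  obtain ⟨m, hm⟩ := Nat.exists_eq_add_of_le hk2
  refine ⟨p ^ m * c.gcdA (p ^ 6), p ^ m * c.gcdB (p ^ 6), ?_⟩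
  have : (p : ℤ) ^ (k + m) = p ^ m * ((p ^ k : ℕ) : ℤ) := by push_cast; ring
  rw [hm, this, h3]; ring

theorem aux_eval {p : ℕ} (hp : p.Prime) (hcard : Nat.card Q = p ^ 6)
    (s : Q) (hs : s ≠ 0) (hps : (C (p : ℤ) : ℤ[X]) • s = 0) (hxs : (X : ℤ[X]) • s = 0)
    (hmin : ∀ q : Q, q ≠ 0 → ∃ f : ℤ[X], f • q = s)
    (h2 : ¬ ∃ G : Finset Q, G.card ≤ 2 ∧ Submodule.span ℤ[X] (G : Set Q) = ⊤)
    (f : ℤ[X]) (hf : ∀ q : Q, f • q = 0) (t : ℤ) : (p : ℤ) ^ 3 ∣ f.eval (t * p) := by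
  by_contra hc
  obtain ⟨a, b, hab⟩ := aux_int hp _ hc
  apply h2
  apply aux_two hp hcard s hs hps hxs hmin (X - C (t * p)) (C (p : ℤ)) 1 (C t) 0 1 1 (-C t)
  · simp
  · simp
  · simp; ring
  intro q hq
  obtain ⟨g, hg⟩ := X_sub_C_dvd_sub_C_eval (a := t * p) (p := f)
  have h3 : (C (f.eval (t * p)) : ℤ[X]) • q = 0 := by
    have : (C (f.eval (t * p)) : ℤ[X]) = f - g * (X - C (t * p)) := by linear_combination -hg
    rw [this, sub_smul, mul_smul, hq, hf]; simp
  rw [← C_pow, hab, C_add, C_mul, C_mul, add_smul, mul_smul, mul_smul, h3, aux_p6 hcard]; simp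

theorem aux_modp {p : ℕ} (hp : p.Prime) (hcard : Nat.card Q = p ^ 6)
    (s : Q) (hs : s ≠ 0) (hps : (C (p : ℤ) : ℤ[X]) • s = 0) (hxs : (X : ℤ[X]) • s = 0)
    (hmin : ∀ q : Q, q ≠ 0 → ∃ f : ℤ[X], f • q = s)
    (h2 : ¬ ∃ G : Finset Q, G.card ≤ 2 ∧ Submodule.span ℤ[X] (G : Set Q) = ⊤)
    (f : ℤ[X]) (hf : ∀ q : Q, f • q = 0) (f0 f1 f2 : ℤ) (g : ℤ[X])
    (hfd : f = C f0 + C f1 * X + C f2 * X ^ 2 + g * X ^ 3) :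
    (p : ℤ) ∣ f0 ∧ (p : ℤ) ∣ f1 ∧ (p : ℤ) ∣ f2 := by
  have : Finite Q := Nat.finite_of_card_ne_zero (by rw [hcard]; exact pow_ne_zero _ hp.ne_zero)
  have : ∃ q : Q, (C (p : ℤ) : ℤ[X]) • q = 0 ∧ (X ^ 2 : ℤ[X]) • q ≠ 0 := by
    by_contra! h
    exact h2 (aux_two hp hcard s hs hps hxs hmin (C (p : ℤ)) X 0 1 1 0 0 1
      (by simp) (by simp) (by simp) h)
  obtain ⟨q, hq, hq2⟩ := this
  obtain ⟨N, hN⟩ := aux_nilp s hs hxs hmin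
  classical
  have hex : ∃ n, (X ^ n : ℤ[X]) • q = 0 := ⟨N, hN q⟩
  obtain ⟨n, hn0, hn1⟩ : ∃ n, (X ^ (n + 2) : ℤ[X]) • q ≠ 0 ∧ (X ^ (n + 3) : ℤ[X]) • q = 0 := by
    have h3 : 2 < Nat.find hex := by
      by_contra! h
      apply hq2
      obtain ⟨d, hd⟩ := Nat.exists_eq_add_of_le h
      rw [hd, add_comm, pow_add, mul_smul, Nat.find_spec hex, smul_zero]
    refine ⟨Nat.find hex - 3, Nat.find_min hex (by omega), ?_⟩
    have : Nat.find hex - 3 + 3 = Nat.find hex := by omega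
    rw [this]; exact Nat.find_spec hex
  set y : Q := (X ^ (n + 2) : ℤ[X]) • q with hy
  have hpy : (C (p : ℤ) : ℤ[X]) • y = 0 := by rw [hy, smul_comm, hq, smul_zero]
  have key : ∀ c : ℤ, (C c : ℤ[X]) • y = 0 → (p : ℤ) ∣ c := by
    intro c hc
    by_contra h
    obtain ⟨u, v, huv⟩ := ((Nat.prime_iff_prime_int.1 hp).coprime_iff_not_dvd).2 h
    apply hn0
    have : (1 : ℤ[X]) • y = 0 := by
      rw [← C_1, ← huv, C_add, C_mul, C_mul, add_smul, mul_smul, mul_smul, hc, hpy]; simp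
    simpa using this
  have hX3 : ∀ h : ℤ[X], (h * X ^ (n + 3)) • q = 0 := fun h => by rw [mul_smul, hn1, smul_zero]
  have hpq : ∀ h : ℤ[X], (h * C (p : ℤ)) • q = 0 := fun h => by rw [mul_smul, hq, smul_zero]
  have d0 : (p : ℤ) ∣ f0 := by
    apply key
    have : (X ^ (n + 2) * f) = C f0 * X ^ (n + 2) + (C f1 + C f2 * X + g * X ^ 2) * X ^ (n + 3) := by
      rw [hfd]; ring
    have h := congrArg (· • q) this
    simp only [add_smul (C f0 * X ^ (n + 2)), hX3, mul_smul, hf, smul_zero, add_zero] at h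
    exact h.symm
  obtain ⟨e0, rfl⟩ := d0
  have d1 : (p : ℤ) ∣ f1 := by
    apply key
    have : (X ^ (n + 1) * f) = C f1 * X ^ (n + 2) + (C f2 + g * X) * X ^ (n + 3)
        + (C e0 * X ^ (n + 1)) * C (p : ℤ) := by
      rw [hfd, C_mul]; ring
    have h := congrArg (· • q) this
    rw [add_smul, add_smul, hX3, hpq, mul_smul, mul_smul, hf, smul_zero, add_zero, add_zero] at h
    exact h.symm
  obtain ⟨e1, rfl⟩ := d1
  have d2 : (p : ℤ) ∣ f2 := by
    apply key
    have : (X ^ n * f) = C f2 * X ^ (n + 2) + g * X ^ (n + 3)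
        + (C e0 * X ^ n + C e1 * X ^ (n + 1)) * C (p : ℤ) := by
      rw [hfd, C_mul, C_mul]; ring
    have h := congrArg (· • q) this
    rw [add_smul, add_smul, hX3, hpq, mul_smul, mul_smul, hf, smul_zero, add_zero, add_zero] at h
    exact h.symm
  exact ⟨⟨e0, rfl⟩, ⟨e1, rfl⟩, d2⟩

theorem aux_A {p : ℕ} (hp : p.Prime) (hcard : Nat.card Q = p ^ 6)
    (s : Q) (hs : s ≠ 0) (hps : (C (p : ℤ) : ℤ[X]) • s = 0) (hxs : (X : ℤ[X]) • s = 0)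
    (hmin : ∀ q : Q, q ≠ 0 → ∃ f : ℤ[X], f • q = s)
    (h2 : ¬ ∃ G : Finset Q, G.card ≤ 2 ∧ Submodule.span ℤ[X] (G : Set Q) = ⊤)
    (f : ℤ[X]) (hf : ∀ q : Q, f • q = 0) (f0 f1 f2 : ℤ) (g : ℤ[X])
    (hfd : f = C f0 + C f1 * X + C f2 * X ^ 2 + g * X ^ 3) :
    (p : ℤ) ^ 3 ∣ f0 ∧ (p : ℤ) ^ 2 ∣ f1 ∧ (p : ℤ) ∣ f2 := by
  obtain ⟨-, -, d2⟩ := aux_modp hp hcard s hs hps hxs hmin h2 f hf f0 f1 f2 g hfd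
  have E0 := aux_eval hp hcard s hs hps hxs hmin h2 f hf 0
  have E1 := aux_eval hp hcard s hs hps hxs hmin h2 f hf 1
  have d0 : (p : ℤ) ^ 3 ∣ f0 := by simpa [hfd] using E0
  refine ⟨d0, ?_, d2⟩
  obtain ⟨a, rfl⟩ := d0
  obtain ⟨b, rfl⟩ := d2
  obtain ⟨c, hc⟩ := E1
  simp only [hfd, one_mul, eval_add, eval_mul, eval_C, eval_X, eval_pow] at hc
  have hpz : (p : ℤ) ≠ 0 := by exact_mod_cast hp.ne_zero
  refine ⟨c - a - b - g.eval (p : ℤ), ?_⟩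
  apply mul_left_cancel₀ hpz
  linear_combination hc

theorem aux_lt {m : ℕ} {a b : ℕ} (ha : a < m) (hb : b < m) (h : (m : ℤ) ∣ (a : ℤ) - b) : a = b := by
  have := Int.eq_zero_of_abs_lt_dvd h (by rw [abs_lt]; omega)
  omega

theorem aux_kill {p : ℕ} (hp : p.Prime) (hcard : Nat.card Q = p ^ 6)
    (s : Q) (hs : s ≠ 0) (hps : (C (p : ℤ) : ℤ[X]) • s = 0) (hxs : (X : ℤ[X]) • s = 0)
    (hmin : ∀ q : Q, q ≠ 0 → ∃ f : ℤ[X], f • q = s)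
    (h2 : ¬ ∃ G : Finset Q, G.card ≤ 2 ∧ Submodule.span ℤ[X] (G : Set Q) = ⊤)
    (ψ : AddChar Q ℂ) (hψ : ψ s ≠ 1) :
    ∀ (f : ℤ[X]) (f0 f1 f2 : ℤ) (g : ℤ[X]),
      f = C (p ^ 3 * f0) + C (p ^ 2 * f1) * X + C (p * f2) * X ^ 2 + g * X ^ 3 → 
      ∀ q : Q, f • q = 0 := by
  have : Finite Q := Nat.finite_of_card_ne_zero (by rw [hcard]; exact pow_ne_zero _ hp.ne_zero)
  have : Fintype Q := Fintype.ofFinite Q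
  let Φ : ℤ[X] → AddChar Q ℂ := fun f => ψ.compAddMonoidHom (DistribSMul.toAddMonoidHom Q f)
  have hΦ : ∀ f q, Φ f q = ψ (f • q) := fun f q => rfl
  have hinj : ∀ f g, Φ f = Φ g → ∀ q : Q, (f - g) • q = 0 := by
    intro f g h q
    by_contra hq
    obtain ⟨k, hk⟩ := hmin _ hq
    apply hψ
    have h1 : Φ f (k • q) = Φ g (k • q) := by rw [h]
    rw [hΦ, hΦ] at h1
    rw [← hk, smul_comm, sub_smul, AddChar.map_sub_eq_div, h1, div_self]
    exact (AddChar.val_isUnit ψ _).ne_zero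
  let rep : Fin (p ^ 3) × Fin (p ^ 2) × Fin p → ℤ[X] := fun t =>
    C (t.1 : ℤ) + C (t.2.1 : ℤ) * X + C (t.2.2 : ℤ) * X ^ 2
  have hbij : Function.Bijective (fun t => Φ (rep t)) := by
    apply Function.Injective.bijective_of_nat_card_le
    · intro a b hab
      have h3 := hinj _ _ hab
      have h4 := aux_A hp hcard s hs hps hxs hmin h2 _ h3 ((a.1 : ℤ) - b.1) ((a.2.1 : ℤ) - b.2.1)
        ((a.2.2 : ℤ) - b.2.2) 0 (by simp only [rep, C_sub]; ring)
      obtain ⟨h5, h6, h7⟩ := h4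
      refine Prod.ext (Fin.ext (aux_lt a.1.2 b.1.2 (by exact_mod_cast h5)))
        (Prod.ext (Fin.ext (aux_lt a.2.1.2 b.2.1.2 (by exact_mod_cast h6)))
        (Fin.ext (aux_lt a.2.2.2 b.2.2.2 (by exact_mod_cast h7))))
    · have : Nat.card (AddChar Q ℂ) = Nat.card Q := by
        rw [Nat.card_eq_fintype_card, Nat.card_eq_fintype_card, AddChar.card_eq]
      rw [this, hcard]
      simp only [Nat.card_prod, Nat.card_fin]
      exact le_of_eq (by ring)
  intro f f0 f1 f2 g hf q
  obtain ⟨t, ht⟩ := hbij.2 (Φ f)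
  have h3 := hinj _ _ ht
  obtain ⟨h5, h6, h7⟩ := aux_A hp hcard s hs hps hxs hmin h2 _ h3 ((t.1 : ℤ) - p ^ 3 * f0)
    ((t.2.1 : ℤ) - p ^ 2 * f1) ((t.2.2 : ℤ) - p * f2) (-g) (by rw [hf]; simp only [rep, C_sub]; ring)
  have h5' := (dvd_sub_left (dvd_mul_right _ _)).1 h5
  have h6' := (dvd_sub_left (dvd_mul_right _ _)).1 h6
  have h7' := (dvd_sub_left (dvd_mul_right _ _)).1 h7
  have e1 : (t.1 : ℕ) = 0 := aux_lt t.1.2 (pow_pos hp.pos 3) (by simpa using h5')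
  have e2 : (t.2.1 : ℕ) = 0 := aux_lt t.2.1.2 (pow_pos hp.pos 2) (by simpa using h6')
  have e3 : (t.2.2 : ℕ) = 0 := aux_lt t.2.2.2 hp.pos (by simpa using h7')
  have := h3 q
  simp only [rep, e1, e2, e3] at this
  simpa using this

theorem aux_lift (N : ℕ) [NeZero N] (φ : AddChar Q ℂ) (h : ∀ q, φ ((N : ℕ) • q) = 1) :
    ∃ g : Q →+ ZMod N, ∀ q, ZMod.stdAddChar (g q) = φ q := by
  have : ∀ q, ∃ j : ZMod N, ZMod.stdAddChar j = φ q := by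
    intro q
    have h1 : φ q ^ N = 1 := by rw [← AddChar.map_nsmul_eq_pow, h]
    obtain ⟨i, -, hi⟩ := (Complex.isPrimitiveRoot_exp N (NeZero.ne N)).eq_pow_of_pow_eq_one h1
    refine ⟨((i : ℤ) : ZMod N), ?_⟩
    rw [ZMod.stdAddChar_coe, ← hi, ← Complex.exp_nat_mul]
    congr 1
    push_cast; ring
  choose g hg using this
  refine ⟨AddMonoidHom.mk' g (fun a b => ZMod.injective_stdAddChar ?_), hg⟩
  rw [AddChar.map_add_eq_mul, hg, hg, hg, AddChar.map_add_eq_mul]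

theorem aux_std (N p : ℕ) [NeZero N] [NeZero (N * p)] (b : ZMod N) :
    ZMod.stdAddChar ((p : ZMod (N * p)) * ((b.val : ℕ) : ZMod (N * p))) = ZMod.stdAddChar b := by
  have h1 : b = ((b.val : ℤ) : ZMod N) := by simp
  conv_rhs => rw [h1]
  have h2 : ((p : ZMod (N * p)) * ((b.val : ℕ) : ZMod (N * p))) = (((p * b.val : ℕ) : ℤ) : ZMod (N * p)) := by
    push_cast; rfl
  rw [h2, ZMod.stdAddChar_coe, ZMod.stdAddChar_coe]
  congr 1
  have hN : (N : ℂ) ≠ 0 := by exact_mod_cast NeZero.ne N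
  have hp : (p : ℂ) ≠ 0 := by
    have := NeZero.ne (N * p)
    exact_mod_cast right_ne_zero_of_mul this
  push_cast
  field_simp

theorem aux_std' (M N p : ℕ) [NeZero M] [NeZero N] (h : M = N * p) (b : ZMod N) :
    ZMod.stdAddChar ((p : ZMod M) * ((b.val : ℕ) : ZMod M)) = ZMod.stdAddChar b := by
  subst h
  exact aux_std N p b

end aux

theorem cocyclic_ZX_module_of_card_p6 (p : ℕ) (hp : p.Prime)
    (Q : Type*) [AddCommGroup Q] [Module (Polynomial ℤ) Q]
    (S : Submodule (Polynomial ℤ) Q)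
    (hS_simple : IsSimpleModule (Polynomial ℤ) S)
    (hS_min : ∀ T : Submodule (Polynomial ℤ) Q, T ≠ ⊥ → S ≤ T)
    (hS_iso : Nonempty (S ≃ₗ[Polynomial ℤ]
      (Polynomial ℤ ⧸ Ideal.span {Polynomial.C (p : ℤ), (Polynomial.X : Polynomial ℤ)})))
    (hcard : Nat.card Q = p ^ 6)
    [Module (Polynomial ℤ) (ZMod (p ^ 3) × ZMod (p ^ 2) × ZMod p)]
    [IsScalarTower ℤ (Polynomial ℤ) (ZMod (p ^ 3) × ZMod (p ^ 2) × ZMod p)]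
    (hX : ∀ a : ZMod (p ^ 3) × ZMod (p ^ 2) × ZMod p,
      (Polynomial.X : Polynomial ℤ) • a =
        ((p : ZMod (p ^ 3)) * ((a.2.1.val : ℕ) : ZMod (p ^ 3)),
         (p : ZMod (p ^ 2)) * ((a.2.2.val : ℕ) : ZMod (p ^ 2)),
         0)) :
    (∃ G : Finset Q, G.card ≤ 3 ∧ Submodule.span (Polynomial ℤ) (G : Set Q) = ⊤) ∧
    ((¬ ∃ G : Finset Q, G.card ≤ 2 ∧ Submodule.span (Polynomial ℤ) (G : Set Q) = ⊤) →
      Nonempty (Q ≃ₗ[Polynomial ℤ] (ZMod (p ^ 3) × ZMod (p ^ 2) × ZMod p))) := by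
  classical
  have : Finite Q := Nat.finite_of_card_ne_zero (by rw [hcard]; exact pow_ne_zero _ hp.ne_zero)
  have : NeZero p := ⟨hp.ne_zero⟩
  have hCz : ∀ (n : ℤ) (a : ZMod (p ^ 3) × ZMod (p ^ 2) × ZMod p), (C n : ℤ[X]) • a = n • a := by
    intro n a
    rw [← Int.cast_smul_eq_zsmul ℤ[X]]; simp
  have hCzQ : ∀ (n : ℤ) (a : Q), (C n : ℤ[X]) • a = n • a := by
    intro n a
    rw [← Int.cast_smul_eq_zsmul ℤ[X]]; simp
  have hsoc : ∀ r ∈ Ideal.span {C (p : ℤ), (X : ℤ[X])}, ∀ t ∈ S, r • t = 0 := by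
    intro r hr t ht
    obtain ⟨e⟩ := hS_iso
    have : r • (⟨t, ht⟩ : S) = 0 := by
      apply e.injective
      rw [map_smul, map_zero]
      obtain ⟨y, hy⟩ := Ideal.Quotient.mk_surjective (e ⟨t, ht⟩)
      rw [← hy]
      change Ideal.Quotient.mk _ (r * y) = 0
      rw [Ideal.Quotient.eq_zero_iff_mem]
      exact Ideal.mul_mem_right _ _ hr
    simpa using congrArg Subtype.val this
  have := hS_simple.nontrivial
  obtain ⟨⟨s, hsS⟩, hs0⟩ := exists_ne (0 : S)
  have hs : s ≠ 0 := fun h => hs0 (Subtype.ext h)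
  have hps : (C (p : ℤ) : ℤ[X]) • s = 0 := hsoc _ (Ideal.subset_span (by simp)) s hsS
  have hxs : (X : ℤ[X]) • s = 0 := hsoc _ (Ideal.subset_span (by simp)) s hsS
  have hmin : ∀ q : Q, q ≠ 0 → ∃ f : ℤ[X], f • q = s := by
    intro q hq
    exact Submodule.mem_span_singleton.1
      (hS_min (Submodule.span ℤ[X] {q}) (by simpa using hq) hsS)
  have main : (¬ ∃ G : Finset Q, G.card ≤ 2 ∧ Submodule.span (Polynomial ℤ) (G : Set Q) = ⊤) →
      Nonempty (Q ≃ₗ[Polynomial ℤ] (ZMod (p ^ 3) × ZMod (p ^ 2) × ZMod p)) := by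
    intro h2
    obtain ⟨ψ, hψ⟩ := AddChar.exists_apply_ne_zero.2 hs
    have kill := aux_kill hp hcard s hs hps hxs hmin h2 ψ hψ
    let Φ : ℤ[X] → AddChar Q ℂ := fun f => ψ.compAddMonoidHom (DistribSMul.toAddMonoidHom Q f)
    have hΦ : ∀ f q, Φ f q = ψ (f • q) := fun f q => rfl
    have hnat : ∀ (n : ℕ) (q : Q), n • q = (C (n : ℤ) : ℤ[X]) • q := by
      intro n q; rw [hCzQ]; simp
    obtain ⟨g3, hg3⟩ := aux_lift (p ^ 3) (Φ 1) (by
      intro q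
      rw [hΦ, hnat, ← mul_smul, kill _ 1 0 0 0 (by simp), AddChar.map_zero_eq_one])
    obtain ⟨g2, hg2⟩ := aux_lift (p ^ 2) (Φ X) (by
      intro q
      rw [hΦ, hnat, ← mul_smul, kill _ 0 1 0 0 (by simp [mul_comm]), AddChar.map_zero_eq_one])
    obtain ⟨g1, hg1⟩ := aux_lift p (Φ (X ^ 2)) (by
      intro q
      rw [hΦ, hnat, ← mul_smul, kill _ 0 0 1 0 (by simp [mul_comm]), AddChar.map_zero_eq_one])
    let F : Q →+ ZMod (p ^ 3) × ZMod (p ^ 2) × ZMod p := g3.prod (g2.prod g1)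
    have hF : ∀ q, F q = (g3 q, g2 q, g1 q) := fun q => rfl
    have hFX : ∀ q, F ((X : ℤ[X]) • q) = (X : ℤ[X]) • F q := by
      intro q
      rw [hX, hF, hF]
      refine Prod.ext (ZMod.injective_stdAddChar ?_)
        (Prod.ext (ZMod.injective_stdAddChar ?_) (ZMod.injective_stdAddChar ?_))
      · simp only
        rw [aux_std' (p ^ 3) (p ^ 2) p (by ring), hg3, hg2, hΦ, hΦ, one_smul]
      · simp only
        rw [aux_std' (p ^ 2) p p (by ring), hg2, hg1, hΦ, hΦ, ← mul_smul, pow_two]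
      · simp only
        rw [hg1, hΦ, ← mul_smul, kill _ 0 0 0 1 (by simp; ring), AddChar.map_zero_eq_one,
          AddChar.map_zero_eq_one]
    have hFl : ∀ (f : ℤ[X]) (q : Q), F (f • q) = f • F q := by
      intro f
      induction f using Polynomial.induction_on with
      | C a => intro q; rw [hCz, hCzQ, map_zsmul]
      | add f g hf hg => intro q; rw [add_smul, add_smul, map_add, hf, hg]
      | monomial n a ih =>
        intro q
        rw [pow_succ (X : ℤ[X]), ← mul_assoc, mul_smul, ih, hFX, ← mul_smul]
    let FL : Q →ₗ[ℤ[X]] ZMod (p ^ 3) × ZMod (p ^ 2) × ZMod p :=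
      { toFun := F, map_add' := map_add F, map_smul' := hFl }
    have hFi : Function.Injective FL := by
      rw [injective_iff_map_eq_zero]
      intro q hq
      by_contra h
      obtain ⟨f, hf⟩ := hmin q h
      apply hψ
      have h0 : F s = 0 := by
        rw [← hf, hFl]
        change f • FL q = 0
        rw [hq, smul_zero]
      have h3 : g3 s = 0 := congrArg Prod.fst h0
      have := hg3 s
      rw [h3, AddChar.map_zero_eq_one, hΦ, one_smul] at this
      exact this.symm
    have hFb : Function.Bijective FL := by
      apply hFi.bijective_of_nat_card_le
      rw [hcard]
      simp only [Nat.card_prod, Nat.card_zmod]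
      exact le_of_eq (by ring)
    exact ⟨LinearEquiv.ofBijective FL hFb⟩
  refine ⟨?_, main⟩
  by_cases h2 : ∃ G : Finset Q, G.card ≤ 2 ∧ Submodule.span (Polynomial ℤ) (G : Set Q) = ⊤
  · obtain ⟨G, h, h'⟩ := h2
    exact ⟨G, h.trans (by norm_num), h'⟩
  obtain ⟨e⟩ := main h2
  refine ⟨{e.symm (1, 0, 0), e.symm (0, 1, 0), e.symm (0, 0, 1)}, Finset.card_le_three, ?_⟩
  rw [eq_top_iff]
  intro q _
  have hq : q = (C ((e q).1.val : ℤ) : ℤ[X]) • e.symm (1, 0, 0)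
      + (C ((e q).2.1.val : ℤ) : ℤ[X]) • e.symm (0, 1, 0)
      + (C ((e q).2.2.val : ℤ) : ℤ[X]) • e.symm (0, 0, 1) := by
    apply e.injective
    rw [map_add, map_add, map_smul, map_smul, map_smul, e.apply_symm_apply, e.apply_symm_apply,
      e.apply_symm_apply, hCz, hCz, hCz]
    ext <;> simp
  rw [hq]
  refine Submodule.add_mem _ (Submodule.add_mem _ ?_ ?_) ?_ <;>
    exact Submodule.smul_mem _ _ (Submodule.subset_span (by simp))
end
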